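/- arXiv:1012.1103 — 3 statements merged into one kernel-verified Lean document; each statement's English description precedes it below -/
import Mathlib

section
/- Let (X,T) be a topological dynamical system with finite topological entropy h_top(T) < ∞. Then there exists a topological dynamical system (H,Γ) with H zero-dimensional and a factor map π : (H,Γ) → (X,T) such that sup_{x∈X} h^{UC}_top(Γ, π^{−1}(x)) = 0. -/
/-!
Multiply `T` by the `p`-adic odometer `g ↦ g + 1`. Every fibre of `X × ℤ_[p] → X` moves
isometrically, so it has zero entropy, and it remains to find a zero-dimensional extension of the
product that adds no entropy over any subset of it.

Such an extension exists for every system with the small boundary property: record, for each set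
`U i` of a separating sequence, a word naming at each time a closed side of `U i` that contains the
orbit. Closed sides overlap only in the frontier of `U i`, which orbits visit with frequency zero,
so a Bowen ball carries subexponentially many words.

The product has the small boundary property because the radius of a ball in `X` may vary with the
odometer. The radius is the limit of nested intervals depending on finitely many `p`-adic digits.
To refine them, choose one of `M` disjoint subintervals independently for each residue modulo
`N = p ^ n`. Finite entropy leaves only `exp (s N)` orbit segments of length `N` to control, and a
segment hits the chosen subintervals more than `η N` times with probability at most
`2 ^ N / M ^ (η N)`, so for large `M` some choice is good for all segments.
-/

open Filter Set MeasureTheory Topology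
open scoped ENNReal NNReal

section Core

variable {X : Type*} [MetricSpace X]

/-- The open Bowen ball `B_n(x, ε)` = `{y : d_n(x,y) < ε}` where
`d_n(x,y) = max_{0 ≤ k ≤ n-1} d(T^k x, T^k y)` is the `n`-th Bowen metric. -/
def bowenBall (T : X → X) (x : X) (n : ℕ) (ε : ℝ) : Set X :=
  {y | ∀ k < n, dist (T^[k] x) (T^[k] y) < ε}

/-- The closed Bowen ball `B̄_n(x, ε)` = `{y : d_n(x,y) ≤ ε}`. -/
def bowenClosedBall (T : X → X) (x : X) (n : ℕ) (ε : ℝ) : Set X :=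
  {y | ∀ k < n, dist (T^[k] x) (T^[k] y) ≤ ε}

/-- `M^s_{N,ε}(Z)`: infimum of `Σ_i exp (- s n_i)` over finite or countable families
of open Bowen balls `{B_{n_i}(x_i, ε)}` with `n_i ≥ N` covering `Z`. -/
noncomputable def Mpre (T : X → X) (s : ℝ) (N : ℕ) (ε : ℝ) (Z : Set X) : ℝ≥0∞ :=
  ⨅ (I : Set ℕ) (x : ℕ → X) (n : ℕ → ℕ) (_ : ∀ i ∈ I, N ≤ n i)
    (_ : Z ⊆ ⋃ i ∈ I, bowenBall T (x i) (n i) ε),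
    ∑' i : I, ENNReal.ofReal (Real.exp (-s * n i))

/-- `M^s_ε(Z) = lim_{N → ∞} M^s_{N,ε}(Z)` (the quantity is nondecreasing in `N`). -/
noncomputable def MpreEps (T : X → X) (s : ℝ) (ε : ℝ) (Z : Set X) : ℝ≥0∞ :=
  ⨆ N : ℕ, Mpre T s N ε Z

/-- `M^s(Z) = lim_{ε → 0} M^s_ε(Z)` (the quantity is nondecreasing as `ε` decreases). -/
noncomputable def Mtop (T : X → X) (s : ℝ) (Z : Set X) : ℝ≥0∞ :=
  ⨆ (ε : ℝ) (_ : 0 < ε), MpreEps T s ε Z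

/-- Bowen's topological entropy `h^B_top(T,Z)`: the critical value of `s` at which
`M^s(Z)` jumps from `∞` to `0`. -/
noncomputable def bowenEntropy (T : X → X) (Z : Set X) : ℝ≥0∞ :=
  ⨆ (s : ℝ) (_ : Mtop T s Z = ∞), ENNReal.ofReal s

/-- `P^s_{N,ε}(Z)`: suprema of `Σ_i exp (- s n_i)` over finite or countable pairwise
disjoint families of closed Bowen balls `{B̄_{n_i}(x_i, ε)}` with `x_i ∈ Z`, `n_i ≥ N`. -/
noncomputable def Ppre (T : X → X) (s : ℝ) (N : ℕ) (ε : ℝ) (Z : Set X) : ℝ≥0∞ :=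
  ⨆ (I : Set ℕ) (x : ℕ → X) (n : ℕ → ℕ) (_ : ∀ i ∈ I, x i ∈ Z ∧ N ≤ n i)
    (_ : ∀ i ∈ I, ∀ j ∈ I, i ≠ j →
      Disjoint (bowenClosedBall T (x i) (n i) ε) (bowenClosedBall T (x j) (n j) ε)),
    ∑' i : I, ENNReal.ofReal (Real.exp (-s * n i))

/-- `P^s_ε(Z) = lim_{N → ∞} P^s_{N,ε}(Z)` (the quantity is nonincreasing in `N`). -/
noncomputable def PpreEps (T : X → X) (s : ℝ) (ε : ℝ) (Z : Set X) : ℝ≥0∞ :=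
  ⨅ N : ℕ, Ppre T s N ε Z

/-- `𝒫^s_ε(Z) = inf { Σ_{i} P^s_ε(Z_i) : ⋃_i Z_i ⊇ Z }`. -/
noncomputable def Pouter (T : X → X) (s : ℝ) (ε : ℝ) (Z : Set X) : ℝ≥0∞ :=
  ⨅ (Zs : ℕ → Set X) (_ : Z ⊆ ⋃ i, Zs i), ∑' i, PpreEps T s ε (Zs i)

/-- `h^P_top(T,Z,ε)`: the critical value of `s` at which `𝒫^s_ε(Z)` jumps from `∞` to `0`. -/
noncomputable def packEntropyEps (T : X → X) (ε : ℝ) (Z : Set X) : ℝ≥0∞ :=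
  ⨆ (s : ℝ) (_ : Pouter T s ε Z = ∞), ENNReal.ofReal s

/-- The packing topological entropy `h^P_top(T,Z) = lim_{ε → 0} h^P_top(T,Z,ε)`
(the quantity is nondecreasing as `ε` decreases). -/
noncomputable def packEntropy (T : X → X) (Z : Set X) : ℝ≥0∞ :=
  ⨆ (ε : ℝ) (_ : 0 < ε), packEntropyEps T ε Z

/-- `r_n(Z,ε)`: the largest cardinality of an `(n,ε)`-separated subset of `Z`,
i.e. a set in which distinct points `x, y` satisfy `d_n(x,y) > ε`. -/
noncomputable def maxSep (T : X → X) (Z : Set X) (n : ℕ) (ε : ℝ) : ℝ≥0∞ :=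
  ⨆ (E : Finset X) (_ : ↑E ⊆ Z ∧
    ∀ x ∈ E, ∀ y ∈ E, x ≠ y → ∃ k < n, ε < dist (T^[k] x) (T^[k] y)),
    (E.card : ℝ≥0∞)

/-- Logarithm on `ℝ≥0∞` (with `elog ∞ = ∞`), used for counting quantities. -/
noncomputable def elog (x : ℝ≥0∞) : ℝ≥0∞ :=
  if x = ∞ then ∞ else ENNReal.ofReal (Real.log x.toReal)

/-- The upper capacity topological entropy
`h^{UC}_top(T,Z) = lim_{ε → 0} limsup_{n → ∞} (1/n) log r_n(Z,ε)`. -/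
noncomputable def upcapEntropy (T : X → X) (Z : Set X) : ℝ≥0∞ :=
  ⨆ (ε : ℝ) (_ : 0 < ε), Filter.limsup (fun n : ℕ => elog (maxSep T Z n ε) / n) Filter.atTop

/-- `- log x` as a function `ℝ≥0∞ → ℝ≥0∞` (with `negLog 0 = ∞`), used for measures of balls. -/
noncomputable def negLog (x : ℝ≥0∞) : ℝ≥0∞ :=
  if x = 0 then ∞ else ENNReal.ofReal (-Real.log x.toReal)

variable [MeasurableSpace X]

/-- The lower local entropy `h̲_μ(T,x) = lim_{ε→0} liminf_{n→∞} -(1/n) log μ(B_n(x,ε))`. -/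
noncomputable def lowerLocalEntropy (T : X → X) (μ : Measure X) (x : X) : ℝ≥0∞ :=
  ⨆ (ε : ℝ) (_ : 0 < ε),
    Filter.liminf (fun n : ℕ => negLog (μ (bowenBall T x n ε)) / n) Filter.atTop

/-- The upper local entropy `h̄_μ(T,x) = lim_{ε→0} limsup_{n→∞} -(1/n) log μ(B_n(x,ε))`. -/
noncomputable def upperLocalEntropy (T : X → X) (μ : Measure X) (x : X) : ℝ≥0∞ :=
  ⨆ (ε : ℝ) (_ : 0 < ε),
    Filter.limsup (fun n : ℕ => negLog (μ (bowenBall T x n ε)) / n) Filter.atTop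

/-- The measure-theoretical lower entropy `h̲_μ(T) = ∫ h̲_μ(T,x) dμ(x)`. -/
noncomputable def lowerEntropy (T : X → X) (μ : Measure X) : ℝ≥0∞ :=
  ∫⁻ x, lowerLocalEntropy T μ x ∂μ

/-- The measure-theoretical upper entropy `h̄_μ(T) = ∫ h̄_μ(T,x) dμ(x)`. -/
noncomputable def upperEntropy (T : X → X) (μ : Measure X) : ℝ≥0∞ :=
  ∫⁻ x, upperLocalEntropy T μ x ∂μ

end Core

/-! ### Separated sets and upper capacity entropy -/

lemma elog_le_ofReal_iff {x : ℝ≥0∞} {t : ℝ} (ht : 0 ≤ t) :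
    elog x ≤ ENNReal.ofReal t ↔ x ≤ ENNReal.ofReal (Real.exp t) := by
  rcases eq_or_ne x ∞ with rfl | hx
  · simp [elog]
  rw [elog, if_neg hx, ENNReal.ofReal_le_ofReal_iff ht,
    ENNReal.le_ofReal_iff_toReal_le hx (Real.exp_nonneg t)]
  rcases ENNReal.toReal_nonneg.eq_or_lt with h0 | hpos
  · rw [← h0, Real.log_zero]
    exact iff_of_true ht (Real.exp_nonneg t)
  · exact Real.log_le_iff_le_exp hpos

section SeparatedSets

variable {X : Type*} [MetricSpace X] {T : X → X} {Z : Set X}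

lemma upcapEntropy_le_ofReal_iff {s : ℝ} (hs : 0 ≤ s) :
    upcapEntropy T Z ≤ ENNReal.ofReal s ↔ ∀ ε > 0, ∀ t > s,
      ∀ᶠ n : ℕ in atTop, maxSep T Z n ε ≤ ENNReal.ofReal (Real.exp (t * n)) := by
  have growth_iff {t ε : ℝ} {n : ℕ} (ht : 0 ≤ t) (hn : 0 < n) :
      elog (maxSep T Z n ε) / n ≤ ENNReal.ofReal t ↔
        maxSep T Z n ε ≤ ENNReal.ofReal (Real.exp (t * n)) := by
    rw [ENNReal.div_le_iff (by simpa using hn.ne') (by simp), ← ENNReal.ofReal_natCast,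
      ← ENNReal.ofReal_mul ht, elog_le_ofReal_iff (by positivity)]
  simp only [upcapEntropy, iSup_le_iff]
  refine forall₂_congr fun ε _ => Iff.trans limsup_le_iff ⟨fun h t hst => ?_, fun h b hb => ?_⟩
  · have ht : 0 < t := hs.trans_lt hst
    filter_upwards [h _ ((ENNReal.ofReal_lt_ofReal_iff ht).2 hst), eventually_gt_atTop 0]
      with n hlt hn
    exact (growth_iff ht.le hn).1 hlt.le
  · obtain ⟨t, ht, hst, htb⟩ := ENNReal.lt_iff_exists_real_btwn.1 hb
    filter_upwards [h t ((ENNReal.ofReal_lt_ofReal_iff_of_nonneg hs).1 hst), eventually_gt_atTop 0]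
      with n hle hn
    exact ((growth_iff ht hn).2 hle).trans_lt htb

/-- `(n, ε)`-separated sets, the sets whose cardinality is maximized by `maxSep`. -/
def IsBowenSeparated (T : X → X) (n : ℕ) (ε : ℝ) (E : Set X) : Prop :=
  E.Pairwise fun x y => ∃ k < n, ε < dist (T^[k] x) (T^[k] y)

variable {n : ℕ} {ε : ℝ}

lemma maxSep_le_iff {c : ℝ≥0∞} :
    maxSep T Z n ε ≤ c ↔
      ∀ E : Finset X, ↑E ⊆ Z → IsBowenSeparated T n ε E → (E.card : ℝ≥0∞) ≤ c := by
  simp only [maxSep, iSup_le_iff, and_imp]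
  rfl

lemma IsBowenSeparated.card_le_maxSep {E : Finset X} (hE : IsBowenSeparated T n ε E)
    (hEZ : ↑E ⊆ Z) : (E.card : ℝ≥0∞) ≤ maxSep T Z n ε :=
  maxSep_le_iff.1 le_rfl E hEZ hE

lemma maxSep_zero_le_one : maxSep T Z 0 ε ≤ 1 := by
  refine maxSep_le_iff.2 fun E _ hE => ?_
  have : E.card ≤ 1 := Finset.card_le_one.2 fun x hx y hy => by
    by_contra hxy
    obtain ⟨k, hk, -⟩ := hE hx hy hxy
    exact Nat.not_lt_zero k hk
  exact_mod_cast this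

lemma exists_finset_card_le_maxSep_and_cover (hε : 0 ≤ ε) (h : maxSep T Z n ε ≠ ∞) :
    ∃ E : Finset X, ↑E ⊆ Z ∧ (E.card : ℝ≥0∞) ≤ maxSep T Z n ε ∧
      Z ⊆ ⋃ z ∈ E, bowenClosedBall T z n ε := by
  classical
  set S : Set (Finset X) := {E | ↑E ⊆ Z ∧ IsBowenSeparated T n ε E}
  have card_bdd : BddAbove (Finset.card '' S) := by
    obtain ⟨K, hK⟩ := ENNReal.exists_nat_gt h
    refine ⟨K, ?_⟩
    rintro _ ⟨E, ⟨hEZ, hE⟩, rfl⟩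
    exact_mod_cast (hE.card_le_maxSep hEZ).trans hK.le
  obtain ⟨E, ⟨hEZ, hE⟩, hmax⟩ : sSup (Finset.card '' S) ∈ Finset.card '' S :=
    Nat.sSup_mem ⟨_, ∅, by simp [S, IsBowenSeparated], rfl⟩ card_bdd
  refine ⟨E, hEZ, hE.card_le_maxSep hEZ, fun x hx => ?_⟩
  by_contra hcov
  have hfar : ∀ z ∈ E, ∃ k < n, ε < dist (T^[k] z) (T^[k] x) := by
    simpa [bowenClosedBall] using hcov
  have hxE : x ∉ E := fun hxE => by
    obtain ⟨k, -, hlt⟩ := hfar x hxE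
    exact (dist_self (T^[k] x) ▸ hlt).not_ge hε
  have hins : insert x E ∈ S := by
    refine ⟨by simpa [insert_subset_iff] using ⟨hx, hEZ⟩, ?_⟩
    rw [Finset.coe_insert]
    refine hE.insert_of_notMem hxE fun z hz => ?_
    obtain ⟨k, hk, hlt⟩ := hfar z hz
    exact ⟨⟨k, hk, by rwa [dist_comm]⟩, ⟨k, hk, hlt⟩⟩
  have := le_csSup card_bdd ⟨_, hins, rfl⟩
  rw [← hmax, Finset.card_insert_of_notMem hxE] at this
  omega

/-! ### Upper capacity entropy is at most Bowen entropy -/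

lemma isOpen_bowenBall (hT : Continuous T) (x : X) (n : ℕ) (ε : ℝ) :
    IsOpen (bowenBall T x n ε) := by
  have : bowenBall T x n ε = ⋂ k ∈ Finset.range n, {y | dist (T^[k] x) (T^[k] y) < ε} := by
    ext y
    simp [bowenBall]
  rw [this]
  exact isOpen_biInter_finset fun k _ =>
    isOpen_lt (continuous_const.dist (hT.iterate k)) continuous_const

lemma Mtop_ne_top_of_bowenEntropy_lt {s : ℝ} (hs : bowenEntropy T Z < ENNReal.ofReal s) :
    Mtop T s Z ≠ ∞ :=
  fun htop => hs.not_ge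
    (le_iSup₂ (f := fun (r : ℝ) (_ : Mtop T r Z = ∞) => ENNReal.ofReal r) s htop)

lemma exists_finite_bowenBall_cover_of_Mtop_lt [CompactSpace X] (hT : Continuous T) {s : ℝ}
    {K : ℝ≥0∞} (hK : Mtop T s univ < K) (N : ℕ) (hε : 0 < ε) :
    ∃ (t : Finset ℕ) (x : ℕ → X) (n : ℕ → ℕ), (∀ i ∈ t, N ≤ n i) ∧
      univ ⊆ ⋃ i ∈ t, bowenBall T (x i) (n i) ε ∧
      ∑ i ∈ t, ENNReal.ofReal (Real.exp (-s * n i)) ≤ K := by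
  have hMpre : Mpre T s N ε univ < K :=
    ((le_iSup (fun N => Mpre T s N ε univ) N).trans
      (le_iSup₂ (f := fun (ε : ℝ) (_ : 0 < ε) => MpreEps T s ε univ) ε hε)).trans_lt hK
  simp only [Mpre, iInf_lt_iff] at hMpre
  obtain ⟨I, x, n, hn, hcov, hsum⟩ := hMpre
  obtain ⟨t, htI, htfin, htcov⟩ := isCompact_univ.elim_finite_subcover_image
    (fun i _ => isOpen_bowenBall hT (x i) (n i) ε) hcov
  lift t to Finset ℕ using htfin
  refine ⟨t, x, n, fun i hi => hn i (htI hi), htcov, ?_⟩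
  calc ∑ i ∈ t, ENNReal.ofReal (Real.exp (-s * n i))
      = ∑' i : t, ENNReal.ofReal (Real.exp (-s * n i)) := by
        rw [Finset.tsum_subtype t fun i => ENNReal.ofReal (Real.exp (-s * n i))]
    _ ≤ ∑' i : I, ENNReal.ofReal (Real.exp (-s * n i)) :=
        ENNReal.tsum_mono_subtype (fun i => ENNReal.ofReal (Real.exp (-s * n i))) htI
    _ ≤ K := hsum.le

lemma exists_finite_bowenBall_cover_sum_le_one [CompactSpace X] (hT : Continuous T) {s : ℝ}
    (hs : bowenEntropy T univ < ENNReal.ofReal s) (hε : 0 < ε) :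
    ∃ (t : Finset ℕ) (x : ℕ → X) (n : ℕ → ℕ), (∀ i ∈ t, 1 ≤ n i) ∧
      univ ⊆ ⋃ i ∈ t, bowenBall T (x i) (n i) ε ∧
      ∑ i ∈ t, ENNReal.ofReal (Real.exp (-s * n i)) ≤ 1 := by
  obtain ⟨r, hr, hTr, hrs⟩ := ENNReal.lt_iff_exists_real_btwn.1 hs
  replace hrs : r < s := (ENNReal.ofReal_lt_ofReal_iff_of_nonneg hr).1 hrs
  obtain ⟨K, hK⟩ := ENNReal.exists_nat_gt (Mtop_ne_top_of_bowenEntropy_lt hTr)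
  obtain ⟨N, hN1, hKN⟩ : ∃ N : ℕ, 1 ≤ N ∧ (K : ℝ) ≤ Real.exp ((s - r) * N) :=
    ((eventually_ge_atTop 1).and ((Real.tendsto_exp_atTop.comp
      (tendsto_natCast_atTop_atTop.const_mul_atTop (sub_pos.2 hrs))).eventually_ge_atTop _)).exists
  obtain ⟨t, x, n, hn, hcov, hsum⟩ := exists_finite_bowenBall_cover_of_Mtop_lt hT hK N hε
  have hterm : ∀ i ∈ t, ENNReal.ofReal (Real.exp (-s * n i)) ≤
      ENNReal.ofReal (Real.exp (-((s - r) * N))) * ENNReal.ofReal (Real.exp (-r * n i)) := by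
    intro i hi
    rw [← ENNReal.ofReal_mul (Real.exp_nonneg _), ← Real.exp_add]
    have : (N : ℝ) ≤ n i := by exact_mod_cast hn i hi
    gcongr
    nlinarith
  refine ⟨t, x, n, fun i hi => hN1.trans (hn i hi), hcov, ?_⟩
  calc ∑ i ∈ t, ENNReal.ofReal (Real.exp (-s * n i))
      ≤ ENNReal.ofReal (Real.exp (-((s - r) * N))) * K := by
        grw [Finset.sum_le_sum hterm, ← Finset.mul_sum, hsum]
    _ ≤ ENNReal.ofReal (Real.exp (-((s - r) * N))) * ENNReal.ofReal (Real.exp ((s - r) * N)) := by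
        grw [← ENNReal.ofReal_natCast, hKN]
    _ = 1 := by
        rw [← ENNReal.ofReal_mul (Real.exp_nonneg _), ← Real.exp_add]
        simp

lemma IsBowenSeparated.card_le_maxSep_sub {E : Finset X} (hE : IsBowenSeparated T n ε E)
    (hε : 0 ≤ ε) {m : ℕ}
    (hclose : ∀ x ∈ E, ∀ y ∈ E, ∀ k < m, dist (T^[k] x) (T^[k] y) ≤ ε) :
    (E.card : ℝ≥0∞) ≤ maxSep T univ (n - m) ε := by
  classical
  have hsep : ∀ x ∈ E, ∀ y ∈ E, x ≠ y →
      ∃ k < n - m, ε < dist (T^[k] (T^[m] x)) (T^[k] (T^[m] y)) := by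
    intro x hx y hy hxy
    obtain ⟨k, hkn, hk⟩ := hE hx hy hxy
    have hmk : m ≤ k := not_lt.1 fun hkm => (hclose x hx y hy k hkm).not_gt hk
    refine ⟨k - m, by omega, ?_⟩
    rwa [← Function.iterate_add_apply, ← Function.iterate_add_apply, Nat.sub_add_cancel hmk]
  have hinj : Set.InjOn T^[m] E := fun x hx y hy hxy => by
    by_contra hne
    obtain ⟨k, -, hk⟩ := hsep x hx y hy hne
    rw [hxy, dist_self] at hk
    exact hk.not_ge hε
  rw [← Finset.card_image_of_injOn hinj]
  refine IsBowenSeparated.card_le_maxSep ?_ (subset_univ _)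
  rw [Finset.coe_image]
  rintro _ ⟨x, hx, rfl⟩ _ ⟨y, hy, rfl⟩ hxy
  exact hsep x hx y hy (ne_of_apply_ne _ hxy)

lemma maxSep_univ_le_sum {ι : Type*} {t : Finset ι} {W : ι → Set X} {m : ι → ℕ} (hε : 0 ≤ ε)
    (hcov : univ ⊆ ⋃ i ∈ t, W i)
    (hW : ∀ i ∈ t, ∀ x ∈ W i, ∀ y ∈ W i, ∀ k < m i, dist (T^[k] x) (T^[k] y) ≤ ε) (n : ℕ) :
    maxSep T univ n ε ≤ ∑ i ∈ t, maxSep T univ (n - m i) ε := by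
  classical
  refine maxSep_le_iff.2 fun E _ hE => ?_
  have hEcov : E ⊆ t.biUnion fun i => E.filter (· ∈ W i) := fun x hx => by
    simpa [hx] using hcov (mem_univ x)
  calc (E.card : ℝ≥0∞) ≤ ∑ i ∈ t, ((E.filter (· ∈ W i)).card : ℝ≥0∞) := by
        exact_mod_cast (Finset.card_le_card hEcov).trans Finset.card_biUnion_le
    _ ≤ ∑ i ∈ t, maxSep T univ (n - m i) ε := Finset.sum_le_sum fun i hi =>
        IsBowenSeparated.card_le_maxSep_sub (hE.mono (E.filter_subset _)) hε fun x hx y hy =>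
          hW i hi x (Finset.mem_filter.1 hx).2 y (Finset.mem_filter.1 hy).2

/-- Split a separated set along a cover of total weight at most `1` by Bowen balls, flow the part in
a ball of length `m` forward by `m` steps, and induct on `n`. -/
lemma exists_maxSep_univ_le_exp [CompactSpace X] (hT : Continuous T) {s : ℝ}
    (hs : bowenEntropy T univ < ENNReal.ofReal s) (hε : 0 < ε) :
    ∃ M : ℕ, ∀ n, maxSep T univ n ε ≤ ENNReal.ofReal (Real.exp (s * (n + M))) := by
  have hs0 : 0 < s := ENNReal.ofReal_pos.1 (zero_le.trans_lt hs)
  obtain ⟨t, x, m, hm, hcov, hsum⟩ := exists_finite_bowenBall_cover_sum_le_one hT hs (half_pos hε)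
  have hclose : ∀ i ∈ t, ∀ y ∈ bowenBall T (x i) (m i) (ε / 2),
      ∀ z ∈ bowenBall T (x i) (m i) (ε / 2), ∀ k < m i, dist (T^[k] y) (T^[k] z) ≤ ε :=
    fun i _ y hy z hz k hk => by
      linarith [dist_triangle_left (T^[k] y) (T^[k] z) (T^[k] (x i)), hy k hk, hz k hk]
  refine ⟨t.sup m, fun n => ?_⟩
  induction n using Nat.strong_induction_on with
  | _ n ih =>
    have hterm : ∀ i ∈ t, maxSep T univ (n - m i) ε ≤
        ENNReal.ofReal (Real.exp (-s * m i)) *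
          ENNReal.ofReal (Real.exp (s * (n + t.sup m : ℕ))) := by
      intro i hi
      rw [← ENNReal.ofReal_mul (Real.exp_nonneg _), ← Real.exp_add]
      rcases le_or_gt n (m i) with hle | hlt
      · have hmax : (m i : ℝ) ≤ (n + t.sup m : ℕ) := by
          exact_mod_cast (Finset.le_sup hi).trans (Nat.le_add_left _ _)
        rw [Nat.sub_eq_zero_of_le hle]
        refine maxSep_zero_le_one.trans (ENNReal.one_le_ofReal.2 (Real.one_le_exp ?_))
        nlinarith
      · refine (ih _ (by have := hm i hi; omega)).trans_eq ?_
        rw [Nat.cast_sub hlt.le]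
        push_cast
        ring_nf
    calc maxSep T univ n ε ≤ ∑ i ∈ t, maxSep T univ (n - m i) ε :=
          maxSep_univ_le_sum hε.le hcov hclose n
      _ ≤ 1 * ENNReal.ofReal (Real.exp (s * (n + t.sup m : ℕ))) := by
          grw [Finset.sum_le_sum hterm, ← Finset.sum_mul, hsum]
      _ = ENNReal.ofReal (Real.exp (s * (n + t.sup m))) := by
          rw [one_mul, Nat.cast_add]

theorem upcapEntropy_univ_le_bowenEntropy [CompactSpace X] (hT : Continuous T) :
    upcapEntropy T univ ≤ bowenEntropy T univ := by
  refine le_of_forall_gt_imp_ge_of_dense fun a ha => ?_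
  obtain ⟨s, hs, hTs, hsa⟩ := ENNReal.lt_iff_exists_real_btwn.1 ha
  refine ((upcapEntropy_le_ofReal_iff hs).2 fun ε hε t hst => ?_).trans hsa.le
  obtain ⟨M, hM⟩ := exists_maxSep_univ_le_exp hT hTs hε
  filter_upwards [(tendsto_natCast_atTop_atTop.const_mul_atTop (sub_pos.2 hst)).eventually_ge_atTop
    (s * M)] with n hn
  refine (hM n).trans (ENNReal.ofReal_le_ofReal (Real.exp_le_exp.2 ?_))
  linarith

end SeparatedSets

/-! ### Zero orbit capacity and the small boundary property -/

section OrbitCapacity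

/-- The number of times `j < n` at which the orbit of `y` visits `B`. -/
noncomputable def visitCount {Y : Type*} (S : Y → Y) (B : Set Y) (n : ℕ) (y : Y) : ℕ :=
  open Classical in Nat.count (fun j => S^[j] y ∈ B) n

/-- The set `B` has orbit capacity zero: the frequency of visits of orbit segments of length `n`
to `B` tends to zero as `n → ∞`, uniformly over all segments. -/
def HasZeroOrbitCapacity {Y : Type*} (S : Y → Y) (B : Set Y) : Prop :=
  ∀ η : ℝ, 0 < η → ∀ᶠ n : ℕ in atTop, ∀ y, (visitCount S B n y : ℝ) ≤ η * n

/-- The small boundary property of Lindenstrauss and Weiss: the open sets whose boundary has zero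
orbit capacity form a basis of the topology. -/
def HasSmallBoundaryProperty {Y : Type*} [TopologicalSpace Y] (S : Y → Y) : Prop :=
  TopologicalSpace.IsTopologicalBasis {U : Set Y | IsOpen U ∧ HasZeroOrbitCapacity S (frontier U)}

variable {Y : Type*} {S : Y → Y} {B C : Set Y}

lemma visitCount_add (m n : ℕ) (y : Y) :
    visitCount S B (m + n) y = visitCount S B m y + visitCount S B n (S^[m] y) := by
  classical
  rw [visitCount, Nat.count_add]
  simp only [visitCount, ← Function.iterate_add_apply, Nat.add_comm]

lemma visitCount_le (n : ℕ) (y : Y) : visitCount S B n y ≤ n := by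
  classical exact Nat.count_le _

lemma visitCount_le_visitCount {n : ℕ} {y y' : Y}
    (h : ∀ j < n, S^[j] y ∈ B → S^[j] y' ∈ C) :
    visitCount S B n y ≤ visitCount S C n y' := by
  classical exact Nat.count_mono_left h

lemma visitCount_le_mul_add {η : ℝ} {N : ℕ} (hN : 0 < N)
    (h : ∀ y, (visitCount S B N y : ℝ) ≤ η * N) (n : ℕ) (y : Y) :
    (visitCount S B n y : ℝ) ≤ η * n + N := by
  have hη : 0 ≤ η := nonneg_of_mul_nonneg_left ((Nat.cast_nonneg _).trans (h y)) (by simpa)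
  induction n using Nat.strong_induction_on generalizing y with
  | _ n ih =>
    rcases lt_or_ge n N with hlt | hge
    · calc (visitCount S B n y : ℝ) ≤ N := by exact_mod_cast (visitCount_le n y).trans hlt.le
        _ ≤ η * n + N := le_add_of_nonneg_left (by positivity)
    · obtain ⟨m, rfl⟩ := Nat.exists_eq_add_of_le hge
      rw [visitCount_add]
      push_cast
      linarith [h y, ih m (by omega) (S^[N] y)]

namespace HasZeroOrbitCapacity

lemma mono (hC : HasZeroOrbitCapacity S C) (hBC : B ⊆ C) : HasZeroOrbitCapacity S B :=
  fun η hη => (hC η hη).mono fun _ h y =>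
    (Nat.cast_le.2 (visitCount_le_visitCount fun _ _ hj => hBC hj)).trans (h y)

lemma empty : HasZeroOrbitCapacity S ∅ := fun η hη => Eventually.of_forall fun n y => by
  simp only [visitCount, mem_empty_iff_false, Nat.count_false, Nat.cast_zero]
  positivity

end HasZeroOrbitCapacity

lemma eventually_visitCount_le_of_window {η η' : ℝ} (hη : η < η') {N : ℕ} (hN : 0 < N)
    (h : ∀ y, (visitCount S B N y : ℝ) ≤ η * N) :
    ∀ᶠ n : ℕ in atTop, ∀ y, (visitCount S B n y : ℝ) ≤ η' * n := by
  filter_upwards [(tendsto_natCast_atTop_atTop.const_mul_atTop (sub_pos.2 hη)).eventually_ge_atTop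
    (N : ℝ)] with n hn y
  linarith [visitCount_le_mul_add hN h n y]

lemma hasZeroOrbitCapacity_of_windows
    (h : ∀ η : ℝ, 0 < η → ∃ N > 0, ∀ y, (visitCount S B N y : ℝ) ≤ η * N) :
    HasZeroOrbitCapacity S B := fun η hη => by
  obtain ⟨N, hN, hwindow⟩ := h _ (half_pos hη)
  exact eventually_visitCount_le_of_window (half_lt_self hη) hN hwindow

lemma eventually_forall_visitCount_thickening_le [PseudoMetricSpace Y] [CompactSpace Y]
    (hS : Continuous S) (hB : IsClosed B) {N r : ℕ} (h : ∀ y, visitCount S B N y ≤ r) :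
    ∀ᶠ δ in 𝓝 (0 : ℝ), ∀ y, visitCount S (Metric.thickening δ B) N y ≤ r := by
  suffices ∀ᶠ δ in 𝓝 (0 : ℝ), ∀ y ∈ univ, visitCount S (Metric.thickening δ B) N y ≤ r by
    simpa using this
  refine isCompact_univ.eventually_forall_of_forall_eventually fun y _ => ?_
  have leave (j : ℕ) (hj : S^[j] y ∉ B) :
      ∀ᶠ p : ℝ × Y in 𝓝 (0, y), S^[j] p.2 ∉ Metric.thickening p.1 B := by
    have hpos : ENNReal.ofReal 0 < Metric.infEDist (S^[j] y) B := by
      rw [ENNReal.ofReal_zero, pos_iff_ne_zero, Ne, ← Metric.mem_closure_iff_infEDist_zero,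
        hB.closure_eq]
      exact hj
    have hopen : IsOpen {p : ℝ × Y | ENNReal.ofReal p.1 < Metric.infEDist (S^[j] p.2) B} :=
      isOpen_lt (ENNReal.continuous_ofReal.comp continuous_fst)
        (Metric.continuous_infEDist.comp ((hS.iterate j).comp continuous_snd))
    filter_upwards [hopen.mem_nhds hpos] with p hp
    exact hp.not_gt
  have hall : ∀ᶠ p : ℝ × Y in 𝓝 (0, y), ∀ j < N, S^[j] y ∉ B →
      S^[j] p.2 ∉ Metric.thickening p.1 B :=
    (finite_lt_nat N).eventually_all.2 fun j _ => by
      by_cases hj : S^[j] y ∈ B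
      · exact Eventually.of_forall fun _ hj' => absurd hj hj'
      · exact (leave j hj).mono fun _ hp _ => hp
  filter_upwards [hall] with p hp
  exact (visitCount_le_visitCount fun j hj => not_imp_not.1 (hp j hj)).trans (h y)

lemma HasZeroOrbitCapacity.exists_isOpen_superset [PseudoMetricSpace Y] [CompactSpace Y]
    (hBS : HasZeroOrbitCapacity S B) (hS : Continuous S) (hB : IsClosed B) {η : ℝ} (hη : 0 < η) :
    ∃ O, IsOpen O ∧ B ⊆ O ∧ ∀ᶠ n : ℕ in atTop, ∀ y, (visitCount S O n y : ℝ) ≤ η * n := by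
  obtain ⟨N, hN, hNpos⟩ := ((hBS _ (half_pos hη)).and (eventually_gt_atTop 0)).exists
  have hwindow : ∀ y, visitCount S B N y ≤ ⌊η / 2 * N⌋₊ := fun y => Nat.le_floor (hN y)
  obtain ⟨δ, hδ, hδpos⟩ := ((eventually_forall_visitCount_thickening_le hS hB hwindow).filter_mono
    nhdsWithin_le_nhds |>.and (eventually_mem_nhdsWithin (s := Ioi 0))).exists
  refine ⟨Metric.thickening δ B, Metric.isOpen_thickening, Metric.self_subset_thickening hδpos B,
    eventually_visitCount_le_of_window (half_lt_self hη) hNpos fun y => ?_⟩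
  exact (Nat.cast_le.2 (hδ y)).trans (Nat.floor_le (by positivity))

lemma HasSmallBoundaryProperty.exists_separating_sequence [TopologicalSpace Y]
    [SecondCountableTopology Y] [T3Space Y] (hS : HasSmallBoundaryProperty S) :
    ∃ U : ℕ → Set Y, (∀ i, HasZeroOrbitCapacity S (frontier (U i))) ∧
      ∀ y y', y ≠ y' → ∃ i, y ∉ closure (U i)ᶜ ∧ y' ∉ closure (U i) := by
  obtain ⟨b, hbS, hbc, hb⟩ := TopologicalSpace.IsTopologicalBasis.exists_countable hS
  obtain ⟨U, hU⟩ := (hbc.insert ∅).exists_eq_range (insert_nonempty ∅ b)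
  have hUi : ∀ i, U i ∈ insert ∅ b := fun i => hU ▸ mem_range_self i
  refine ⟨U, fun i => ?_, fun y y' hne => ?_⟩
  · rcases hUi i with h | h
    · rw [h, frontier_empty]
      exact HasZeroOrbitCapacity.empty
    · exact (hbS h).2
  · obtain ⟨V, hV, hyV, hVy'⟩ := hb.exists_closure_subset (isOpen_ne.mem_nhds hne)
    obtain ⟨i, rfl⟩ : V ∈ range U := hU ▸ mem_insert_of_mem ∅ hV
    refine ⟨i, ?_, fun hy' => hVy' hy' rfl⟩
    rwa [closure_compl, mem_compl_iff, not_not, (hb.isOpen hV).interior_eq]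

end OrbitCapacity

/-! ### Itineraries -/

section Itineraries

variable {Y : Type*} {S : Y → Y} {U : Set Y}

/-- The closed side of `U` named by `b`: the closure of `U` or of its complement. The two sides
overlap exactly in the frontier of `U`. -/
def closedSide [TopologicalSpace Y] (U : Set Y) (b : Bool) : Set Y :=
  closure (cond b U Uᶜ)

/-- The words of length `n` that name, letter by letter, a closed side of `U` containing the
orbit of some point of `A`. A point may have several words, as both letters are allowed whenever
its orbit meets the frontier of `U`. -/
def itineraries [TopologicalSpace Y] (S : Y → Y) (U A : Set Y) (n : ℕ) : Set (Fin n → Bool) :=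
  {w | ∃ y ∈ A, ∀ j, S^[j] y ∈ closedSide U (w j)}

lemma isClosed_closedSide [TopologicalSpace Y] (U : Set Y) (b : Bool) :
    IsClosed (closedSide U b) := isClosed_closure

lemma exists_mem_closedSide [TopologicalSpace Y] (U : Set Y) (y : Y) :
    ∃ b, y ∈ closedSide U b := by
  by_cases hy : y ∈ U
  · exact ⟨true, subset_closure hy⟩
  · exact ⟨false, subset_closure hy⟩

lemma iInter_closedSide [TopologicalSpace Y] (U : Set Y) : ⋂ b, closedSide U b = frontier U := by
  rw [frontier_eq_closure_inter_closure, inter_eq_iInter]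
  exact iInter_congr fun b => by cases b <;> rfl

lemma ncard_le_two_pow_count {n : ℕ} {p : ℕ → Prop} [DecidablePred p] {W : Set (Fin n → Bool)}
    (hW : ∀ v ∈ W, ∀ w ∈ W, ∀ j : Fin n, ¬ p j → v j = w j) : W.ncard ≤ 2 ^ Nat.count p n := by
  let := Nat.CountSet.fintype p n
  let restrict (w : Fin n → Bool) (k : {k // k < n ∧ p k}) : Bool := w ⟨k, k.2.1⟩
  have hinj : InjOn restrict W := fun v hv w hw hvw => funext fun j => by
    by_cases hj : p j
    · exact congrFun hvw ⟨j, j.2, hj⟩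
    · exact hW v hv w hw j hj
  calc W.ncard ≤ (univ : Set ({k // k < n ∧ p k} → Bool)).ncard :=
        ncard_le_ncard_of_injOn restrict (fun _ _ => mem_univ _) hinj finite_univ
    _ = 2 ^ Nat.count p n := by
        rw [ncard_univ, Nat.card_eq_fintype_card, Fintype.card_fun, Fintype.card_bool,
          Nat.count_eq_card_fintype]

lemma eventually_ncard_itineraries_le_two_pow [MetricSpace Y] [CompactSpace Y] {O : Set Y}
    (hO : IsOpen O) (hUO : frontier U ⊆ O) :
    ∀ᶠ δ in 𝓝[>] (0 : ℝ), ∀ n z,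
      (itineraries S U (bowenClosedBall S z n δ) n).ncard ≤ 2 ^ visitCount S O n z := by
  classical
  have hcov : Oᶜ ⊆ ⋃ b, (closedSide U b)ᶜ := by
    rw [← compl_iInter, iInter_closedSide]
    exact compl_subset_compl.2 hUO
  obtain ⟨r, hr, hLebesgue⟩ := lebesgue_number_lemma_of_metric hO.isClosed_compl.isCompact
    (fun b => (isClosed_closedSide U b).isOpen_compl) hcov
  filter_upwards [Ioo_mem_nhdsGT hr] with δ hδ n z
  refine ncard_le_two_pow_count fun v hv w hw j hj => ?_
  obtain ⟨b, hb⟩ := hLebesgue _ hj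
  have letter_ne : ∀ u ∈ itineraries S U (bowenClosedBall S z n δ) n, u j ≠ b := by
    rintro u ⟨y, hy, hyu⟩ rfl
    refine hb (Metric.mem_ball.2 ?_) (hyu j)
    rw [dist_comm]
    exact (hy j j.2).trans_lt hδ.2
  rw [Bool.eq_not_of_ne (letter_ne v hv), Bool.eq_not_of_ne (letter_ne w hw)]

lemma HasZeroOrbitCapacity.eventually_ncard_itineraries_le_exp [MetricSpace Y] [CompactSpace Y]
    (hU : HasZeroOrbitCapacity S (frontier U)) (hS : Continuous S) {η : ℝ} (hη : 0 < η) :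
    ∀ᶠ δ in 𝓝[>] (0 : ℝ), ∀ᶠ n : ℕ in atTop, ∀ z,
      ((itineraries S U (bowenClosedBall S z n δ) n).ncard : ℝ) ≤ Real.exp (η * n) := by
  obtain ⟨O, hO, hUO, hvisits⟩ := hU.exists_isOpen_superset hS isClosed_frontier hη
  filter_upwards [eventually_ncard_itineraries_le_two_pow (S := S) hO hUO] with δ hδ
  filter_upwards [hvisits] with n hn z
  calc ((itineraries S U (bowenClosedBall S z n δ) n).ncard : ℝ) ≤ 2 ^ visitCount S O n z := by
        exact_mod_cast hδ n z
    _ ≤ Real.exp 1 ^ visitCount S O n z := by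
        gcongr
        linarith [Real.add_one_le_exp 1]
    _ = Real.exp (visitCount S O n z) := by rw [← Real.exp_nat_mul, mul_one]
    _ ≤ Real.exp (η * n) := Real.exp_le_exp.2 (hn z)

end Itineraries

/-! ### Symbolic extensions by itineraries -/

section SymbolicExtension

variable {Y : Type*} [MetricSpace Y] {S : Y → Y} {U : ℕ → Set Y}

lemma exists_forall_letters_eq_imp_dist_lt {H : Type*} [PseudoMetricSpace H] [CompactSpace H]
    {ω : H → ℕ → ℕ → Bool} (hω : Continuous ω) (hinj : Function.Injective ω) {ε : ℝ}
    (hε : 0 < ε) :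
    ∃ m : ℕ, ∀ h h', (∀ i < m, ∀ n < m, ω h i n = ω h' i n) → dist h h' < ε := by
  let differ (m : ℕ) : Set (H × H) := ⋃ i < m, ⋃ n < m, {p | ω p.1 i n ≠ ω p.2 i n}
  have hletter (i n : ℕ) : Continuous fun h => ω h i n :=
    (continuous_apply n).comp ((continuous_apply i).comp hω)
  have hopen (m : ℕ) : IsOpen (differ m) :=
    isOpen_iUnion fun i => isOpen_iUnion fun _ => isOpen_iUnion fun n => isOpen_iUnion fun _ =>
      isOpen_ne_fun ((hletter i n).comp continuous_fst) ((hletter i n).comp continuous_snd)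
  have hmono : Monotone differ := fun m m' hm =>
    biUnion_mono (fun i hi => lt_of_lt_of_le hi hm) fun i _ =>
      biUnion_mono (fun n hn => lt_of_lt_of_le hn hm) fun _ _ => Subset.rfl
  have hfar : IsCompact {p : H × H | ε ≤ dist p.1 p.2} :=
    (isClosed_le continuous_const continuous_dist).isCompact
  have hcover : {p : H × H | ε ≤ dist p.1 p.2} ⊆ ⋃ m, differ m := fun p hp => by
    have hne : ω p.1 ≠ ω p.2 := fun h => by
      have : dist p.1 p.2 = 0 := by rw [hinj h, dist_self]
      exact (hε.trans_le hp).ne' this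
    obtain ⟨i, hi⟩ := Function.ne_iff.1 hne
    obtain ⟨n, hn⟩ := Function.ne_iff.1 hi
    simp only [differ, mem_iUnion, exists_prop]
    exact ⟨max i n + 1, i, by omega, n, by omega, hn⟩
  obtain ⟨m, hm⟩ := hfar.elim_directed_cover differ hopen hcover hmono.directed_le
  refine ⟨m, fun h h' heq => not_le.1 fun hle => ?_⟩
  obtain ⟨i, hi, n, hn, hne⟩ : ∃ i < m, ∃ n < m, ω h i n ≠ ω h' i n := by
    simpa [differ] using hm (show (h, h') ∈ {p : H × H | ε ≤ dist p.1 p.2} from hle)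
  exact hne (heq i hi n hn)

variable {H : Type*} [MetricSpace H] {Γ : H → H} {π : H → Y} {ω : H → ℕ → ℕ → Bool}

lemma IsBowenSeparated.card_le_of_itineraries {E : Finset H} {F : Finset Y} {n m : ℕ} {ε δ c : ℝ}
    (hE : IsBowenSeparated Γ n ε E)
    (hωΓ : ∀ h i n, ω (Γ h) i n = ω h i (n + 1))
    (hside : ∀ h i n, S^[n] (π h) ∈ closedSide (U i) (ω h i n))
    (hm : ∀ h h', (∀ i < m, ∀ k < m, ω h i k = ω h' i k) → dist h h' < ε)
    (hF : π '' E ⊆ ⋃ z ∈ F, bowenClosedBall S z (n + m) δ)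
    (hc : ∀ i < m, ∀ z,
      ((itineraries S (U i) (bowenClosedBall S z (n + m) δ) (n + m)).ncard : ℝ) ≤ c) :
    (E.card : ℝ) ≤ F.card * c ^ m := by
  have hωΓ' (k i j : ℕ) (h : H) : ω (Γ^[k] h) i j = ω h i (j + k) := by
    induction k generalizing h with
    | zero => rfl
    | succ k ih => rw [Function.iterate_succ_apply, ih, hωΓ, add_assoc]
  let code (h : H) (i : Fin m) (j : Fin (n + m)) : Bool := ω h i j
  let words (z : Y) (i : Fin m) := itineraries S (U i) (bowenClosedBall S z (n + m) δ) (n + m)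
  have code_mem : MapsTo code E (⋃ z ∈ F, univ.pi (words z)) := fun h hh => by
    obtain ⟨z, hz, hzh⟩ := mem_iUnion₂.1 (hF (mem_image_of_mem π hh))
    exact mem_biUnion hz fun i _ => ⟨π h, hzh, fun j => hside h i j⟩
  have code_injOn : InjOn code E := fun h hh h' hh' heq => by
    by_contra hne
    obtain ⟨k, hk, hlt⟩ := hE hh hh' hne
    refine hlt.not_gt (hm _ _ fun i hi j hj => ?_)
    rw [hωΓ', hωΓ']
    exact congrFun₂ heq ⟨i, hi⟩ ⟨j + k, by omega⟩
  have card_words (z : Y) : ((univ.pi (words z)).ncard : ℝ) ≤ c ^ m := by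
    rw [← Nat.card_coe_set_eq, Nat.card_congr (Equiv.Set.univPi (words z)), Nat.card_pi,
      Nat.cast_prod]
    calc ∏ i, (Nat.card (words z i) : ℝ) ≤ ∏ _i : Fin m, c :=
          Finset.prod_le_prod (fun _ _ => Nat.cast_nonneg _) fun i _ => hc (i : ℕ) i.2 z
      _ = c ^ m := by simp
  calc (E.card : ℝ) = ((E : Set H).ncard : ℝ) := by rw [ncard_coe_finset]
    _ ≤ ((⋃ z ∈ F, univ.pi (words z)).ncard : ℝ) := by
        exact_mod_cast ncard_le_ncard_of_injOn code code_mem code_injOn (toFinite _)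
    _ ≤ ∑ z ∈ F, ((univ.pi (words z)).ncard : ℝ) := by
        exact_mod_cast F.set_ncard_biUnion_le _
    _ ≤ F.card * c ^ m := by
        simpa using Finset.sum_le_card_nsmul F _ _ fun z _ => card_words z

theorem upcapEntropy_preimage_le_of_itineraries [CompactSpace Y] [CompactSpace H]
    (hS : Continuous S) (hU : ∀ i, HasZeroOrbitCapacity S (frontier (U i)))
    (hω : Continuous ω) (hinj : Function.Injective ω)
    (hωΓ : ∀ h i n, ω (Γ h) i n = ω h i (n + 1))
    (hside : ∀ h i n, S^[n] (π h) ∈ closedSide (U i) (ω h i n)) (Z : Set Y) :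
    upcapEntropy Γ (π ⁻¹' Z) ≤ upcapEntropy S Z := by
  refine le_of_forall_gt_imp_ge_of_dense fun a ha => ?_
  obtain ⟨s, hs, hSs, hsa⟩ := ENNReal.lt_iff_exists_real_btwn.1 ha
  refine ((upcapEntropy_le_ofReal_iff hs).2 fun ε hε t hst => ?_).trans hsa.le
  obtain ⟨m, hm⟩ := exists_forall_letters_eq_imp_dist_lt hω hinj hε
  set r : ℝ := (t - s) / 3 with hr
  have hr0 : 0 < r := by rw [hr]; linarith
  obtain ⟨δ, hwords, hδ⟩ := (((finite_lt_nat m).eventually_all.2 fun i _ =>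
    (hU i).eventually_ncard_itineraries_le_exp hS (η := r / (m + 1)) (by positivity)).and
      (eventually_mem_nhdsWithin (s := Ioi 0))).exists
  have hshift : Tendsto (fun n => n + m) atTop atTop := tendsto_add_atTop_nat m
  filter_upwards [hshift.eventually ((finite_lt_nat m).eventually_all.2 hwords),
    hshift.eventually ((upcapEntropy_le_ofReal_iff hs).1 hSs.le δ hδ (s + r) (by linarith)),
    (tendsto_natCast_atTop_atTop.const_mul_atTop hr0).eventually_ge_atTop ((s + 2 * r) * m)]
    with n hcount hsep hn
  refine maxSep_le_iff.2 fun E hEZ hE => ?_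
  obtain ⟨F, -, hF, hcov⟩ := exists_finset_card_le_maxSep_and_cover (le_of_lt hδ)
    (hsep.trans_lt ENNReal.ofReal_lt_top).ne
  have hFexp : (F.card : ℝ) ≤ Real.exp ((s + r) * (n + m : ℕ)) :=
    (ENNReal.ofReal_le_ofReal_iff (Real.exp_nonneg _)).1
      ((ENNReal.ofReal_natCast _).trans_le (hF.trans hsep))
  have hEexp : (E.card : ℝ) ≤ Real.exp (t * n) := calc
    (E.card : ℝ) ≤ F.card * Real.exp (r / (m + 1) * (n + m : ℕ)) ^ m :=
      hE.card_le_of_itineraries hωΓ hside hm ((image_subset_iff.2 hEZ).trans hcov) hcount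
    _ ≤ Real.exp ((s + r) * (n + m : ℕ)) * Real.exp (r / (m + 1) * (n + m : ℕ)) ^ m := by
      gcongr
    _ = Real.exp ((s + r + r * (m / (m + 1))) * (n + m)) := by
      rw [← Real.exp_nat_mul, ← Real.exp_add]
      push_cast
      ring_nf
    _ ≤ Real.exp ((s + r + r * 1) * (n + m)) := by
      have : (m : ℝ) / (m + 1) ≤ 1 := (div_le_one (by positivity)).2 (by linarith)
      gcongr
    _ ≤ Real.exp (t * n) := Real.exp_le_exp.2 (by nlinarith)
  exact (ENNReal.ofReal_natCast _).symm.trans_le (ENNReal.ofReal_le_ofReal hEexp)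

/-- The points of `Y` together with, for each `i`, a word `h.2 i` naming at each time a closed side
of `U i` that contains the orbit. -/
def codingSpace {Y : Type*} [TopologicalSpace Y] (S : Y → Y) (U : ℕ → Set Y) :
    Set (Y × (ℕ → ℕ → Bool)) :=
  {h | ∀ i n, S^[n] h.1 ∈ closedSide (U i) (h.2 i n)}

/-- The dynamics on `codingSpace S U`: move the point and shift its words. -/
def codingMap {Y : Type*} (S : Y → Y) : Y × (ℕ → ℕ → Bool) → Y × (ℕ → ℕ → Bool) :=
  Prod.map S fun ω i n => ω i (n + 1)

lemma isClosed_codingSpace (hS : Continuous S) : IsClosed (codingSpace S U) := by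
  have hclosed (i : ℕ) : IsClosed {p : Y × Bool | p.1 ∈ closedSide (U i) p.2} := by
    have : {p : Y × Bool | p.1 ∈ closedSide (U i) p.2} = ⋃ b, closedSide (U i) b ×ˢ {b} := by
      ext p
      simp [mem_prod]
    rw [this]
    exact isClosed_iUnion_of_finite fun b => (isClosed_closedSide _ b).prod isClosed_singleton
  simp only [codingSpace, Set.ofPred_forall]
  refine isClosed_iInter fun i => isClosed_iInter fun n => ?_
  have hcont : Continuous fun h : Y × (ℕ → ℕ → Bool) => (S^[n] h.1, h.2 i n) :=
    ((hS.iterate n).comp continuous_fst).prodMk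
      ((continuous_apply n).comp ((continuous_apply i).comp continuous_snd))
  exact (hclosed i).preimage hcont

lemma mapsTo_codingMap : MapsTo (codingMap S) (codingSpace S U) (codingSpace S U) :=
  fun _ hh i n => hh i (n + 1)

lemma continuous_codingMap (hS : Continuous S) : Continuous (codingMap S) := by
  unfold codingMap
  fun_prop

lemma surjOn_fst_codingSpace : SurjOn Prod.fst (codingSpace S U) univ := fun y _ => by
  choose ω hω using fun i n => exists_mem_closedSide (U i) (S^[n] y)
  exact ⟨(y, ω), hω, rfl⟩

lemma injOn_snd_codingSpace
    (hsep : ∀ y y', y ≠ y' → ∃ i, y ∉ closure (U i)ᶜ ∧ y' ∉ closure (U i)) :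
    InjOn Prod.snd (codingSpace S U) := fun h hh h' hh' heq => by
  refine Prod.ext (by_contra fun hne => ?_) heq
  obtain ⟨i, hi, hi'⟩ := hsep _ _ hne
  have hside : h.1 ∈ closedSide (U i) (h.2 i 0) := hh i 0
  have hside' : h'.1 ∈ closedSide (U i) (h.2 i 0) := heq ▸ hh' i 0
  cases hb : h.2 i 0 <;> rw [hb] at hside hside'
  · exact hi hside
  · exact hi' hside'

theorem HasSmallBoundaryProperty.exists_totallyDisconnected_extension {Y : Type u} [MetricSpace Y]
    [CompactSpace Y] {S : Y → Y} (hSBP : HasSmallBoundaryProperty S) (hS : Continuous S) :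
    ∃ (H : Type u) (_ : MetricSpace H) (_ : CompactSpace H) (_ : TotallyDisconnectedSpace H)
      (Γ : H → H) (π : H → Y), Continuous Γ ∧ Continuous π ∧ Function.Surjective π ∧
      Function.Semiconj π Γ S ∧ ∀ Z, upcapEntropy Γ (π ⁻¹' Z) ≤ upcapEntropy S Z := by
  obtain ⟨U, hU, hsep⟩ := hSBP.exists_separating_sequence
  let H := codingSpace S U
  let ω (h : H) : ℕ → ℕ → Bool := h.1.2
  have hω : Continuous ω := continuous_snd.comp continuous_subtype_val
  have hinj : Function.Injective ω := injOn_iff_injective.1 (injOn_snd_codingSpace hsep)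
  let _ : MetricSpace H := TopologicalSpace.metrizableSpaceMetric H
  have hcompact : CompactSpace H := isCompact_iff_compactSpace.1 (isClosed_codingSpace hS).isCompact
  have hdisconnected : TotallyDisconnectedSpace H :=
    ⟨isTotallyDisconnected_of_image hω.continuousOn hinj
      (isTotallyDisconnected_of_totallyDisconnectedSpace _)⟩
  refine ⟨H, inferInstance, hcompact, hdisconnected, mapsTo_codingMap.restrict, fun h => h.1.1,
    (continuous_codingMap hS).restrict _, continuous_fst.comp continuous_subtype_val, ?_,
    fun _ => rfl, fun Z => ?_⟩
  · intro y
    obtain ⟨h, hh, rfl⟩ := surjOn_fst_codingSpace (S := S) (U := U) (mem_univ y)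
    exact ⟨⟨h, hh⟩, rfl⟩
  · exact upcapEntropy_preimage_le_of_itineraries hS hU hω hinj (fun _ _ _ => rfl) (fun h => h.2) Z

end SymbolicExtension

lemma exists_finset_clopen_partition_diam_lt {H : Type*} [MetricSpace H] [CompactSpace H]
    [TotallyDisconnectedSpace H] {δ : ℝ} (hδ : 0 < δ) :
    ∃ P : Finset (Set H), (∀ V ∈ P, IsClopen V ∧ Metric.diam V < δ) ∧
      (P : Set (Set H)).PairwiseDisjoint id ∧ ⋃₀ (P : Set (Set H)) = univ := by
  classical
  choose D hD hxD hDball using fun x : H =>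
    compact_exists_isClopen_in_isOpen (Metric.isOpen_ball (x := x) (ε := δ / 3))
      (Metric.mem_ball_self (by positivity))
  obtain ⟨t, ht⟩ := isCompact_univ.elim_finite_subcover D (fun x => (hD x).isOpen)
    fun x _ => mem_iUnion.2 ⟨x, hxD x⟩
  obtain ⟨C, hC, -, hCD, hDC, hdisj⟩ := exists_clopen_partition_of_clopen_cover
    (Z := fun _ : t => ∅) (D := fun x : t => D x) (fun _ => isClosed_empty) (fun x => hD x)
    (fun _ => empty_subset _) (fun _ _ _ _ _ => disjoint_bot_left)
  refine ⟨Finset.univ.image C, ?_, ?_, ?_⟩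
  · simp only [Finset.mem_image, Finset.mem_univ, true_and, forall_exists_index,
      forall_apply_eq_imp_iff]
    refine fun x => ⟨hC x, ?_⟩
    calc Metric.diam (C x) ≤ Metric.diam (Metric.ball (x : H) (δ / 3)) :=
          Metric.diam_mono ((hCD x).trans (hDball x)) Metric.isBounded_ball
      _ ≤ 2 * (δ / 3) := Metric.diam_ball (by positivity)
      _ < δ := by linarith
  · rw [Finset.coe_image, Finset.coe_univ]
    rintro _ ⟨x, -, rfl⟩ _ ⟨y, -, rfl⟩ hne
    exact hdisj (mem_univ x) (mem_univ y) (ne_of_apply_ne C hne)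
  · rw [Finset.coe_image, Finset.coe_univ, image_univ, sUnion_range, eq_univ_iff_forall]
    intro x
    exact hDC (by simpa using ht (mem_univ x))

/-! ### Moving thresholds -/

/-- Markov's inequality for the moment `c ↦ ∑ σ, card κ ^ #{j | A σ j (c j)}` of a uniformly random
choice function `c`: the coordinates are independent and each contributes a factor at most `2`
to the expectation. -/
lemma exists_forall_card_hits_lt {ι J κ : Type*} [Fintype ι] [Fintype J] [Fintype κ] [Nonempty κ]
    (A : ι → J → κ → Prop) [∀ i j, DecidablePred (A i j)]
    (hA : ∀ i j, {k | A i j k}.Subsingleton) {r : ℕ}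
    (h : Fintype.card ι * 2 ^ Fintype.card J < Fintype.card κ ^ r) :
    ∃ c : J → κ, ∀ i, (Finset.univ.filter fun j => A i j (c j)).card < r := by
  classical
  set K := Fintype.card κ
  let hits (i : ι) (c : J → κ) : ℕ := (Finset.univ.filter fun j => A i j (c j)).card
  have factor_le (i : ι) (j : J) : ∑ k, (if A i j k then K else 1) ≤ 2 * K := by
    have hone : (Finset.univ.filter (A i j)).card ≤ 1 := Finset.card_le_one.2 fun k hk l hl =>
      hA i j (by simpa using hk) (by simpa using hl)
    have hK : (Finset.univ.filter fun k => ¬ A i j k).card ≤ K := Finset.card_le_univ _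
    rw [Finset.sum_ite, Finset.sum_const, Finset.sum_const, smul_eq_mul, smul_eq_mul]
    nlinarith
  have moment_le (i : ι) : ∑ c, K ^ hits i c ≤ (2 * K) ^ Fintype.card J := calc
    ∑ c, K ^ hits i c = ∑ c : J → κ, ∏ j, (if A i j (c j) then K else 1) := by
      simp only [hits, Finset.prod_ite, Finset.prod_const, one_pow, mul_one]
    _ = ∏ j, ∑ k, (if A i j k then K else 1) := by
      rw [Finset.prod_univ_sum, Fintype.piFinset_univ]
    _ ≤ (2 * K) ^ Fintype.card J := Finset.prod_le_pow_card _ _ _ fun j _ => factor_le i j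
  have total_lt : ∑ c : J → κ, ∑ i, K ^ hits i c < ∑ _c : J → κ, K ^ r := calc
    ∑ c : J → κ, ∑ i, K ^ hits i c ≤ Fintype.card ι * (2 * K) ^ Fintype.card J := by
      rw [Finset.sum_comm]
      exact Finset.sum_le_card_nsmul _ _ _ fun i _ => moment_le i
    _ = Fintype.card ι * 2 ^ Fintype.card J * K ^ Fintype.card J := by rw [mul_pow, mul_assoc]
    _ < K ^ r * K ^ Fintype.card J := Nat.mul_lt_mul_of_pos_right h (by positivity)
    _ = ∑ _c : J → κ, K ^ r := by simp [K, mul_comm]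
  obtain ⟨c, -, hc⟩ := Finset.exists_lt_of_sum_lt total_lt
  refine ⟨c, fun i => lt_of_not_ge fun hr => hc.not_ge ?_⟩
  exact (Nat.pow_le_pow_right Fintype.card_pos hr).trans
    (Finset.single_le_sum (f := fun i => K ^ hits i c) (fun _ _ => Nat.zero_le _)
      (Finset.mem_univ i))

lemma mul_mul_two_pow_lt_pow_floor {s η : ℝ} (hη : 0 < η) {L M N : ℕ} (hs : 0 ≤ s)
    (hL : (L : ℝ) ≤ Real.exp (s * N)) (hM : Real.exp ((s + 2) / η) ≤ M) :
    L * N * 2 ^ N < M ^ (⌊η * N⌋₊ + 1) := by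
  have htwo : (2 : ℝ) ≤ Real.exp 1 := by linarith [Real.add_one_le_exp 1]
  have hNpow : (N : ℝ) < 2 ^ N := by exact_mod_cast Nat.lt_two_pow_self
  suffices (L * N * 2 ^ N : ℝ) < M ^ (⌊η * N⌋₊ + 1) by exact_mod_cast this
  calc (L * N * 2 ^ N : ℝ) ≤ Real.exp (s * N) * N * 2 ^ N := by gcongr
    _ < Real.exp (s * N) * 2 ^ N * 2 ^ N := by gcongr
    _ ≤ Real.exp (s * N) * Real.exp 1 ^ N * Real.exp 1 ^ N := by gcongr
    _ = Real.exp ((s + 2) / η * (η * N)) := by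
      rw [← Real.exp_nat_mul, ← Real.exp_add, ← Real.exp_add]
      field_simp
      ring_nf
    _ ≤ Real.exp ((s + 2) / η * (⌊η * N⌋₊ + 1)) := by
      gcongr
      exact (Nat.lt_floor_add_one _).le
    _ = Real.exp ((s + 2) / η) ^ (⌊η * N⌋₊ + 1) := by
      rw [← Real.exp_nat_mul]
      push_cast
      ring_nf
    _ ≤ M ^ (⌊η * N⌋₊ + 1) := by gcongr

lemma iterate_prodMap_add_one {α R : Type*} [AddMonoidWithOne R] (T : α → α) (j : ℕ)
    (y : α × R) : (Prod.map T (· + 1))^[j] y = (T^[j] y.1, y.2 + j) := by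
  rw [Prod.map_iterate, add_right_iterate, nsmul_one]
  rfl

section MovingThreshold

variable {X : Type*} [MetricSpace X] {T : X → X} {f : X → ℝ}

lemma eventually_exists_finset_card_le_exp_and_cover {s t ε : ℝ} (hs : 0 ≤ s)
    (hTs : upcapEntropy T univ ≤ ENNReal.ofReal s) (hst : s < t) (hε : 0 < ε) :
    ∀ᶠ n : ℕ in atTop, ∃ E : Finset X, (E.card : ℝ) ≤ Real.exp (t * n) ∧
      ∀ x, ∃ z ∈ E, x ∈ bowenClosedBall T z n ε := by
  filter_upwards [(upcapEntropy_le_ofReal_iff hs).1 hTs ε hε t hst] with n hn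
  obtain ⟨E, -, hE, hcov⟩ := exists_finset_card_le_maxSep_and_cover hε.le
    (hn.trans_lt ENNReal.ofReal_lt_top).ne
  refine ⟨E, (ENNReal.ofReal_le_ofReal_iff (Real.exp_nonneg _)).1
    ((ENNReal.ofReal_natCast _).trans_le (hE.trans hn)), fun x => ?_⟩
  simpa using hcov (mem_univ x)

lemma exists_forall_count_near_le (N M r : ℕ) [NeZero N] [NeZero M] {u ε : ℝ}
    {E : Finset X} (hcov : ∀ x, ∃ z ∈ E, x ∈ bowenClosedBall T z N ε)
    (hf : ∀ x y, dist x y ≤ ε → dist (f x) (f y) < u / 4)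
    (hcard : E.card * N * 2 ^ N < M ^ (r + 1)) (a : ZMod N → ℝ) :
    ∃ c : ZMod N → Fin M, ∀ (x : X) (ρ : ZMod N),
      ((Finset.range N).filter fun j : ℕ =>
        dist (f (T^[j] x)) (a (ρ + j) + c (ρ + j) * u) ≤ u / 4).card ≤ r := by
  classical
  let A (i : E × ZMod N) (q : ZMod N) (k : Fin M) : Prop :=
    dist (f (T^[(q - i.2).val] i.1)) (a q + k * u) < u / 2
  have hA (i q) : {k | A i q k}.Subsingleton := fun k hk l hl => by
    have hkl : dist (a q + k * u) (a q + l * u) < u :=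
      (dist_triangle_left _ _ _).trans_lt ((add_lt_add hk hl).trans_eq (add_halves u))
    have hu : 0 < u := dist_nonneg.trans_lt hkl
    rw [dist_add_left, Real.dist_eq, ← sub_mul, abs_mul, abs_of_pos hu, mul_lt_iff_lt_one_left hu]
      at hkl
    have : |(k : ℤ) - l| < 1 := by exact_mod_cast hkl
    exact Fin.ext (by have := Int.abs_lt_one_iff.1 this; omega)
  obtain ⟨c, hc⟩ := exists_forall_card_hits_lt A hA (r := r + 1)
    (by simpa [ZMod.card] using hcard)
  refine ⟨c, fun x ρ => ?_⟩
  obtain ⟨z, hz, hzx⟩ := hcov x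
  refine Nat.lt_succ_iff.1 (lt_of_le_of_lt ?_ (hc (⟨z, hz⟩, ρ)))
  have val_eq {j : ℕ} (hj : j < N) : (ρ + j - ρ).val = j := by
    rw [add_sub_cancel_left, ZMod.val_cast_of_lt hj]
  refine Finset.card_le_card_of_injOn (fun j : ℕ => ρ + j) (fun j hj => ?_) fun i hi j hj hij => ?_
  · obtain ⟨hjN, hnear⟩ : j < N ∧ _ := by simpa using hj
    have hclose : dist (f (T^[j] z)) (f (T^[j] x)) < u / 4 := hf _ _ (hzx j hjN)
    have hhit : dist (f (T^[j] z)) (a (ρ + j) + c (ρ + j) * u) < u / 2 := by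
      linarith [dist_triangle (f (T^[j] z)) (f (T^[j] x)) (a (ρ + j) + c (ρ + j) * u)]
    exact Finset.mem_coe.2 (Finset.mem_filter.2
      ⟨Finset.mem_univ _, by simpa only [A, val_eq hjN] using hhit⟩)
  · rw [← val_eq (j := i) (by simp_all), ← val_eq (j := j) (by simp_all)]
    exact congrArg (fun q => (q - ρ).val) hij

lemma exists_forall_eventually_count_near_le [CompactSpace X] (hf : Continuous f)
    (hT : upcapEntropy T univ ≠ ∞) {η : ℝ} (hη : 0 < η) :
    ∃ M : ℕ, 0 < M ∧ ∀ u > 0, ∀ᶠ N : ℕ in atTop, ∀ a : ZMod N → ℝ, ∃ c : ZMod N → Fin M,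
      ∀ (x : X) (ρ : ZMod N), (((Finset.range N).filter fun j : ℕ =>
        dist (f (T^[j] x)) (a (ρ + j) + c (ρ + j) * u) ≤ u / 4).card : ℝ) ≤ η * N := by
  lift upcapEntropy T univ to ℝ≥0 using hT with s hs
  have hTs : upcapEntropy T univ ≤ ENNReal.ofReal s := by rw [← hs, ENNReal.ofReal_coe_nnreal]
  obtain ⟨M, hM⟩ := exists_nat_ge (Real.exp ((s + 1 + 2) / η))
  have hM0 : 0 < M := by exact_mod_cast (Real.exp_pos _).trans_le hM
  refine ⟨M, hM0, fun u hu => ?_⟩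
  obtain ⟨ε, hε, hfε⟩ := Metric.uniformContinuous_iff.1
    (CompactSpace.uniformContinuous_of_continuous hf) (u / 4) (by positivity)
  filter_upwards [eventually_exists_finset_card_le_exp_and_cover s.2 hTs (lt_add_one _)
    (half_pos hε), eventually_gt_atTop 0] with N hE hN a
  obtain ⟨E, hEcard, hcov⟩ := hE
  have : NeZero N := ⟨hN.ne'⟩
  have : NeZero M := ⟨hM0.ne'⟩
  obtain ⟨c, hc⟩ := exists_forall_count_near_le N M _ hcov
    (fun x y hxy => hfε (hxy.trans_lt (half_lt_self hε)))
    (mul_mul_two_pow_lt_pow_floor (s := s + 1) hη (by positivity) hEcard hM) a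
  exact ⟨c, fun x ρ => (Nat.cast_le.2 (hc x ρ)).trans (Nat.floor_le (by positivity))⟩

variable {p : ℕ} [Fact p.Prime]

/-- A closed ball in `ℝ` that moves along with the first `level` digits of a point of the
`p`-adic odometer `g ↦ g + 1`. -/
structure MovingBall (p : ℕ) where
  /-- the number of `p`-adic digits the ball depends on -/
  level : ℕ
  /-- the centre, in terms of these digits -/
  center : ZMod (p ^ level) → ℝ
  /-- the radius -/
  radius : ℝ
  radius_pos : 0 < radius

namespace MovingBall

/-- The position of the moving ball at the point `g` of the odometer. -/
def ball (I : MovingBall p) (g : ℤ_[p]) : Set ℝ :=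
  Metric.closedBall (I.center (PadicInt.toZModPow I.level g)) I.radius

/-- `I` is a refinement of `J` whose radius is at most half as large and which `f` visits with
frequency at most `η` along orbits of `T` times the odometer. -/
structure IsRefinement (T : X → X) (f : X → ℝ) (η : ℝ) (I J : MovingBall p) : Prop where
  ball_subset : ∀ g, I.ball g ⊆ J.ball g
  radius_le : I.radius ≤ J.radius / 2
  exists_window : ∃ N > 0, ∀ y : X × ℤ_[p],
    (visitCount (Prod.map T (· + 1)) {y | f y.1 ∈ I.ball y.2} N y : ℝ) ≤ η * N

end MovingBall

lemma MovingBall.exists_isRefinement [CompactSpace X] (hf : Continuous f)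
    (hT : upcapEntropy T univ ≠ ∞) {η : ℝ} (hη : 0 < η) (J : MovingBall p) :
    ∃ I : MovingBall p, IsRefinement T f η I J := by
  obtain ⟨M, hM, hchoice⟩ := exists_forall_eventually_count_near_le hf hT hη
  set u : ℝ := J.radius / M with hu
  have hu0 : 0 < u := div_pos J.radius_pos (by exact_mod_cast hM)
  have hMu : M * u = J.radius := by rw [hu]; field_simp
  obtain ⟨n, hN, hn⟩ := (((tendsto_pow_atTop_atTop_of_one_lt
    (Fact.out : p.Prime).one_lt).eventually (hchoice u hu0)).and
    (eventually_ge_atTop J.level)).exists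
  let digits : ZMod (p ^ n) →+* ZMod (p ^ J.level) := ZMod.castHom (pow_dvd_pow p hn) _
  obtain ⟨c, hc⟩ := hN fun q => J.center (digits q)
  have digits_toZModPow (g : ℤ_[p]) :
      digits (PadicInt.toZModPow n g) = PadicInt.toZModPow J.level g :=
    RingHom.congr_fun (PadicInt.zmod_cast_comp_toZModPow J.level n hn) g
  refine ⟨⟨n, fun q => J.center (digits q) + c q * u, u / 4, by positivity⟩,
    fun g => Metric.closedBall_subset_closedBall' ?_, ?_, p ^ n,
    pow_pos (Fact.out : p.Prime).pos n, fun y => ?_⟩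
  · have hcM : (c (PadicInt.toZModPow n g) : ℝ) + 1 ≤ M := by
      exact_mod_cast (c (PadicInt.toZModPow n g)).2
    change u / 4 + dist (J.center (digits (PadicInt.toZModPow n g)) +
      c (PadicInt.toZModPow n g) * u) _ ≤ J.radius
    rw [digits_toZModPow, dist_self_add_left, Real.norm_of_nonneg (by positivity)]
    nlinarith
  · have hM1 : (1 : ℝ) ≤ M := by exact_mod_cast hM
    change u / 4 ≤ J.radius / 2
    nlinarith
  · classical
    simpa [visitCount, Nat.count_eq_card_filter_range, iterate_prodMap_add_one, ball] using
      hc y.1 (PadicInt.toZModPow n y.2)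

lemma isLocallyConstant_toZModPow (n : ℕ) :
    IsLocallyConstant (PadicInt.toZModPow n : ℤ_[p] → ZMod (p ^ n)) := by
  refine (IsLocallyConstant.iff_eventually_eq _).2 fun g => ?_
  have hr : (0 : ℝ) < (p : ℝ) ^ (-n : ℤ) :=
    zpow_pos (by exact_mod_cast (Fact.out : p.Prime).pos) _
  filter_upwards [Metric.closedBall_mem_nhds g hr] with g' hg'
  rwa [← sub_eq_zero, ← map_sub, ← RingHom.mem_ker, PadicInt.ker_toZModPow,
    ← PadicInt.norm_le_pow_iff_mem_span_pow, ← dist_eq_norm]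

lemma continuous_of_forall_mem_ball {I : ℕ → MovingBall p}
    (hI : Tendsto (fun k => (I k).radius) atTop (𝓝 0)) {θ : ℤ_[p] → ℝ}
    (hθ : ∀ k g, θ g ∈ (I k).ball g) : Continuous θ := by
  refine continuous_of_uniform_approx_of_continuous fun V hV => ?_
  obtain ⟨ε, hε, hV⟩ := Metric.mem_uniformity_dist.1 hV
  obtain ⟨k, hk⟩ := (hI.eventually_lt_const hε).exists
  exact ⟨fun g => (I k).center (PadicInt.toZModPow (I k).level g),
    ((isLocallyConstant_toZModPow _).comp _).continuous, fun g => hV ((hθ k g).trans_lt hk)⟩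

theorem exists_continuous_moving_threshold [CompactSpace X] (hf : Continuous f)
    (hT : upcapEntropy T univ ≠ ∞) (a : ℝ) {R : ℝ} (hR : 0 < R) :
    ∃ θ : ℤ_[p] → ℝ, Continuous θ ∧ (∀ g, θ g ∈ Metric.closedBall a R) ∧
      HasZeroOrbitCapacity (Prod.map T (· + 1)) {y : X × ℤ_[p] | f y.1 = θ y.2} := by
  choose refine hrefine using fun (k : ℕ) (J : MovingBall p) =>
    J.exists_isRefinement hf hT (Nat.one_div_pos_of_nat (α := ℝ) (n := k))
  let I (k : ℕ) : MovingBall p := Nat.rec ⟨0, fun _ => a, R, hR⟩ refine k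
  have hI (k : ℕ) : MovingBall.IsRefinement T f (1 / (k + 1)) (I (k + 1)) (I k) := hrefine k (I k)
  have hradius (k : ℕ) : (I k).radius ≤ R * (1 / 2) ^ k := by
    induction k with
    | zero => simp [I]
    | succ k ih => rw [pow_succ]; linarith [(hI k).radius_le]
  have htendsto : Tendsto (fun k => (I k).radius) atTop (𝓝 0) :=
    squeeze_zero (fun k => (I k).radius_pos.le) hradius
      (by simpa using (tendsto_pow_atTop_nhds_zero_of_lt_one (r := (1 / 2 : ℝ))
        (by norm_num) (by norm_num)).const_mul R)
  have hne (g : ℤ_[p]) : (⋂ k, (I k).ball g).Nonempty :=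
    IsCompact.nonempty_iInter_of_sequence_nonempty_isCompact_isClosed _
      (fun k => (hI k).ball_subset g)
      (fun k => Metric.nonempty_closedBall.2 (I k).radius_pos.le)
      (isCompact_closedBall _ _) fun _ => Metric.isClosed_closedBall
  choose θ hθ using hne
  replace hθ (k : ℕ) (g : ℤ_[p]) : θ g ∈ (I k).ball g := mem_iInter.1 (hθ g) k
  refine ⟨θ, continuous_of_forall_mem_ball htendsto hθ, hθ 0,
    hasZeroOrbitCapacity_of_windows fun η hη => ?_⟩
  obtain ⟨k, hk⟩ := exists_nat_one_div_lt hη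
  obtain ⟨N, hN, hvisits⟩ := (hI k).exists_window
  refine ⟨N, hN, fun y => ?_⟩
  calc (visitCount _ {y : X × ℤ_[p] | f y.1 = θ y.2} N y : ℝ)
      ≤ visitCount _ {y : X × ℤ_[p] | f y.1 ∈ (I (k + 1)).ball y.2} N y := by
        refine Nat.cast_le.2 (visitCount_le_visitCount fun j _ (hj : f _ = θ _) => ?_)
        change f _ ∈ (I (k + 1)).ball _
        rw [hj]
        exact hθ (k + 1) _
    _ ≤ 1 / (k + 1) * N := hvisits y
    _ ≤ η * N := by gcongr

theorem hasSmallBoundaryProperty_prodMap_add_one [CompactSpace X]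
    (hT : upcapEntropy T univ ≠ ∞) :
    HasSmallBoundaryProperty (Prod.map T (· + 1) : X × ℤ_[p] → X × ℤ_[p]) := by
  refine TopologicalSpace.isTopologicalBasis_of_isOpen_of_nhds (fun U hU => hU.1) ?_
  rintro ⟨x, g⟩ W hxg hW
  obtain ⟨V₁, hV₁, V₂, hV₂, hVW⟩ := mem_nhds_prod_iff.1 (hW.mem_nhds hxg)
  obtain ⟨ε, hε, hball⟩ := Metric.mem_nhds_iff.1 hV₁
  obtain ⟨V, ⟨hgV, hV⟩, hVV₂⟩ := (nhds_basis_clopen g).mem_iff.1 hV₂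
  obtain ⟨θ, hθ, hθε, hcap⟩ := exists_continuous_moving_threshold (p := p)
    (continuous_id.dist continuous_const : Continuous fun y => dist y x) hT (ε / 2)
    (R := ε / 4) (by positivity)
  simp only [Real.closedBall_eq_Icc, mem_Icc] at hθε
  have hdist : Continuous fun y : X × ℤ_[p] => dist y.1 x := continuous_fst.dist continuous_const
  refine ⟨{y | dist y.1 x < θ y.2} ∩ Prod.snd ⁻¹' V, ⟨?_, hcap.mono ?_⟩, ?_, ?_⟩
  · exact (isOpen_lt hdist (hθ.comp continuous_snd)).inter (hV.isOpen.preimage continuous_snd)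
  · refine (frontier_inter_subset _ _).trans (union_subset (inter_subset_left.trans ?_) ?_)
    · exact frontier_lt_subset_eq hdist (hθ.comp continuous_snd)
    · rw [(hV.preimage continuous_snd).frontier_eq, inter_empty]
      exact empty_subset _
  · refine ⟨?_, hgV⟩
    change dist x x < θ g
    rw [dist_self]
    linarith [(hθε g).1]
  · rintro ⟨x', g'⟩ ⟨hx' : dist x' x < θ g', hg'⟩
    exact hVW ⟨hball (Metric.mem_ball.2 (by linarith [(hθε g').2])), hVV₂ hg'⟩

end MovingThreshold

/-! ### Fibres of the odometer extension -/

lemma exists_forall_maxSep_le_of_dist_iterate_le {X : Type*} [MetricSpace X] {T : X → X}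
    {Z : Set X} (hZ : TotallyBounded Z)
    (hT : ∀ x ∈ Z, ∀ y ∈ Z, ∀ k, dist (T^[k] x) (T^[k] y) ≤ dist x y) {ε : ℝ} (hε : 0 < ε) :
    ∃ K : ℕ, ∀ n, maxSep T Z n ε ≤ K := by
  classical
  obtain ⟨t, ht, hcov⟩ := Metric.totallyBounded_iff.1 hZ (ε / 2) (half_pos hε)
  lift t to Finset X using ht
  refine ⟨t.card, fun n => maxSep_le_iff.2 fun E hEZ hE => Nat.cast_le.2 ?_⟩
  have hnear : ∀ x ∈ E, ∃ z ∈ t, dist x z < ε / 2 := fun x hx => by simpa using hcov (hEZ hx)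
  choose! c hct hc using hnear
  refine Finset.card_le_card_of_injOn c hct fun x hx y hy hxy => by_contra fun hne => ?_
  obtain ⟨k, -, hk⟩ := hE hx hy hne
  have hcy : dist y (c x) < ε / 2 := hxy ▸ hc y hy
  linarith [hT x (hEZ hx) y (hEZ hy) k, dist_triangle_right x y (c x), hc x hx]

lemma upcapEntropy_eq_zero_of_dist_iterate_le {X : Type*} [MetricSpace X] {T : X → X}
    {Z : Set X} (hZ : TotallyBounded Z)
    (hT : ∀ x ∈ Z, ∀ y ∈ Z, ∀ k, dist (T^[k] x) (T^[k] y) ≤ dist x y) :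
    upcapEntropy T Z = 0 := by
  suffices upcapEntropy T Z ≤ ENNReal.ofReal 0 by simpa using this
  refine (upcapEntropy_le_ofReal_iff le_rfl).2 fun ε hε t ht => ?_
  obtain ⟨K, hK⟩ := exists_forall_maxSep_le_of_dist_iterate_le hZ hT hε
  filter_upwards [(Real.tendsto_exp_atTop.comp
    (tendsto_natCast_atTop_atTop.const_mul_atTop ht)).eventually_ge_atTop (K : ℝ)] with n hn
  exact (hK n).trans ((ENNReal.ofReal_natCast K).symm.trans_le (ENNReal.ofReal_le_ofReal hn))

lemma upcapEntropy_prodMap_add_one_fiber {X : Type*} [MetricSpace X] [CompactSpace X] {p : ℕ}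
    [Fact p.Prime] (T : X → X) (x : X) :
    upcapEntropy (Prod.map T (· + 1) : X × ℤ_[p] → X × ℤ_[p]) (Prod.fst ⁻¹' {x}) = 0 := by
  refine upcapEntropy_eq_zero_of_dist_iterate_le (isCompact_univ.totallyBounded.subset
    (subset_univ _)) ?_
  rintro ⟨_, g⟩ rfl ⟨_, g'⟩ rfl k
  simp [iterate_prodMap_add_one, Prod.dist_eq]

/-- **Feng–Huang, Lemma 3.12**: every topological dynamical system `(X,T)` with finite
topological entropy `h_top(T) = h^B_top(T,X) < ∞` admits a zero-dimensional extension
`π : (H,Γ) → (X,T)` all of whose fibers have zero upper capacity topological entropy: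
`sup_{x ∈ X} h^{UC}_top(Γ, π⁻¹(x)) = 0`. -/
theorem exists_zeroDimensional_extension_with_zero_fiber_entropy
    {X : Type u} [MetricSpace X] [CompactSpace X]
    (T : X → X) (hT : Continuous T) (hfin : bowenEntropy T Set.univ ≠ ∞) :
    ∃ (H : Type u) (_ : MetricSpace H) (_ : CompactSpace H) (Γ : H → H) (π : H → X),
      Continuous Γ ∧ Continuous π ∧ Function.Surjective π ∧ π ∘ Γ = T ∘ π ∧
      (∀ δ : ℝ, 0 < δ → ∃ P : Finset (Set H),
        (∀ V ∈ P, IsClopen V ∧ Metric.diam V < δ) ∧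
        (P : Set (Set H)).PairwiseDisjoint id ∧ ⋃₀ (P : Set (Set H)) = Set.univ) ∧
      (⨆ x : X, upcapEntropy Γ (π ⁻¹' {x})) = 0 := by
  have hupcap : upcapEntropy T univ ≠ ∞ :=
    ((upcapEntropy_univ_le_bowenEntropy hT).trans_lt hfin.lt_top).ne
  obtain ⟨H, _, _, _, Γ, π, hΓ, hπ, hsurj, hsemiconj, hentropy⟩ :=
    (hasSmallBoundaryProperty_prodMap_add_one (p := 2) hupcap).exists_totallyDisconnected_extension
      (hT.prodMap (continuous_id.add continuous_const))
  refine ⟨H, inferInstance, inferInstance, Γ, Prod.fst ∘ π, hΓ, continuous_fst.comp hπ,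
    Prod.fst_surjective.comp hsurj, ?_, fun δ hδ => exists_finset_clopen_partition_diam_lt hδ,
    ENNReal.iSup_eq_zero.2 fun x => nonpos_iff_eq_zero.1 ?_⟩
  · exact funext fun h => congrArg Prod.fst (hsemiconj h)
  · calc upcapEntropy Γ (Prod.fst ∘ π ⁻¹' {x})
        = upcapEntropy Γ (π ⁻¹' (Prod.fst ⁻¹' {x})) := by rw [preimage_comp]
      _ ≤ upcapEntropy (Prod.map T (· + 1)) (Prod.fst ⁻¹' {x}) := hentropy _
      _ = 0 := upcapEntropy_prodMap_add_one_fiber T x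
end

section
/- Let (X,T) be a topological dynamical system, Z ⊆ X, and s, ε > 0. Assume P^s_ε(Z) = ∞. Then for every finite interval (a,b) ⊂ ℝ with a ≥ 0 and every N ∈ ℕ, there exists a finite pairwise disjoint collection of closed Bowen balls {B̄_{n_i}(x_i,ε)} with x_i ∈ Z and n_i ≥ N such that Σ_i e^{−n_i s} ∈ (a,b). -/
/-!
For large `n` a single ball has weight `e^{-ns} < b - a`. A disjoint family of balls of such orders
with total weight greater than `a` has a finite subfamily with the same property. Removing its balls
one at a time lowers the sum to `0 ≤ a` by steps shorter than the length of `(a, b)`, so the sum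
cannot jump over the interval.
-/

open Filter Set MeasureTheory Topology
open scoped ENNReal NNReal

section SubsetSum

variable {ι : Type*}

lemma exists_subset_sum_mem_Ioo {M : Type*} [AddCommMonoid M] [LinearOrder M]
    [AddLeftReflectLT M] {f : ι → M} {F : Finset ι} {a b : M} (ha : 0 ≤ a)
    (hf : ∀ i ∈ F, f i + a < b) (hF : a < ∑ i ∈ F, f i) :
    ∃ G ⊆ F, ∑ i ∈ G, f i ∈ Ioo a b := by
  classical
  induction F using Finset.induction_on with
  | empty => exact absurd hF (by simpa only [Finset.sum_empty, not_lt] using ha)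
  | insert i F hi ih =>
    rw [Finset.forall_mem_insert] at hf
    rcases lt_or_ge (∑ j ∈ insert i F, f j) b with hlt | hge
    · exact ⟨insert i F, subset_rfl, hF, hlt⟩
    · have hF' : a < ∑ j ∈ F, f j := by
        rw [Finset.sum_insert hi] at hge
        exact lt_of_add_lt_add_left (hf.1.trans_le hge)
      obtain ⟨G, hGF, hG⟩ := ih hf.2 hF'
      exact ⟨G, hGF.trans (Finset.subset_insert i F), hG⟩

lemma exists_finset_subset_lt_sum_of_lt_tsum {f : ι → ℝ≥0∞} {I : Set ι} {c : ℝ≥0∞}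
    (h : c < ∑' i : I, f i) : ∃ F : Finset ι, ↑F ⊆ I ∧ c < ∑ i ∈ F, f i := by
  rw [ENNReal.tsum_eq_iSup_sum, lt_iSup_iff] at h
  obtain ⟨F, hF⟩ := h
  refine ⟨F.map (Function.Embedding.subtype (· ∈ I)), F.map_subtype_subset, ?_⟩
  rwa [Finset.sum_map]

end SubsetSum

lemma tendsto_exp_neg_natCast_mul_atTop {s : ℝ} (hs : 0 < s) :
    Tendsto (fun n : ℕ => Real.exp (-(n : ℝ) * s)) atTop (𝓝 0) := by
  simp only [neg_mul]
  exact Real.tendsto_exp_neg_atTop_nhds_zero.comp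
    (tendsto_natCast_atTop_atTop.atTop_mul_const hs)

section BowenPacking

variable {X ι : Type*} [MetricSpace X]

/-- The closed Bowen balls `B̄_{n i}(x i, ε)`, `i ∈ I`, form a packing of `Z` of order at least `N`:
they have centres in `Z`, orders `n i ≥ N`, and are pairwise disjoint. These are the families over
which `Ppre` takes its supremum. As there, disjointness is required of distinct indices, so two
indices may not carry the same nonempty ball. -/
structure IsBowenPacking (T : X → X) (Z : Set X) (N : ℕ) (ε : ℝ) (I : Set ι) (x : ι → X)
    (n : ι → ℕ) : Prop where
  center_mem : ∀ i ∈ I, x i ∈ Z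
  le_order : ∀ i ∈ I, N ≤ n i
  pairwiseDisjoint : I.PairwiseDisjoint fun i => bowenClosedBall T (x i) (n i) ε

variable {T : X → X} {Z : Set X} {s ε : ℝ}

lemma IsBowenPacking.mono {M N : ℕ} {I J : Set ι} {x : ι → X} {n : ι → ℕ}
    (h : IsBowenPacking T Z N ε I x n) (hJI : J ⊆ I) (hMN : M ≤ N) :
    IsBowenPacking T Z M ε J x n where
  center_mem i hi := h.center_mem i (hJI hi)
  le_order i hi := hMN.trans (h.le_order i (hJI hi))
  pairwiseDisjoint := h.pairwiseDisjoint.subset hJI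

lemma exists_isBowenPacking_lt_tsum_of_lt_Ppre {N : ℕ} {c : ℝ≥0∞} (h : c < Ppre T s N ε Z) :
    ∃ (I : Set ℕ) (x : ℕ → X) (n : ℕ → ℕ), IsBowenPacking T Z N ε I x n ∧
      c < ∑' i : I, ENNReal.ofReal (Real.exp (-s * n i)) := by
  simp only [Ppre, lt_iSup_iff] at h
  obtain ⟨I, x, n, hI, hdisj, hc⟩ := h
  exact ⟨I, x, n, ⟨fun i hi => (hI i hi).1, fun i hi => (hI i hi).2,
    fun i hi j hj => hdisj i hi j hj⟩, hc⟩

lemma exists_finset_isBowenPacking_lt_sum_of_lt_Ppre {N : ℕ} {a : ℝ} (ha : 0 ≤ a)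
    (h : ENNReal.ofReal a < Ppre T s N ε Z) :
    ∃ (F : Finset ℕ) (x : ℕ → X) (n : ℕ → ℕ), IsBowenPacking T Z N ε F x n ∧
      a < ∑ i ∈ F, Real.exp (-(n i : ℝ) * s) := by
  obtain ⟨I, x, n, hI, hlt⟩ := exists_isBowenPacking_lt_tsum_of_lt_Ppre h
  obtain ⟨F, hFI, hF⟩ := exists_finset_subset_lt_sum_of_lt_tsum
    (f := fun i => ENNReal.ofReal (Real.exp (-s * n i))) hlt
  refine ⟨F, x, n, hI.mono hFI le_rfl, ?_⟩
  rw [← ENNReal.ofReal_sum_of_nonneg fun _ _ => (Real.exp_pos _).le,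
    ENNReal.ofReal_lt_ofReal_iff_of_nonneg ha] at hF
  simpa only [neg_mul, mul_comm s] using hF

theorem exists_finite_disjoint_packing_sum_mem_Ioo_general {a b : ℝ} (hs : 0 < s) (ha : 0 ≤ a)
    (hab : a < b) (hP : ENNReal.ofReal a < PpreEps T s ε Z) (N : ℕ) :
    ∃ (I : Finset ℕ) (x : ℕ → X) (n : ℕ → ℕ), IsBowenPacking T Z N ε I x n ∧
      ∑ i ∈ I, Real.exp (-(n i : ℝ) * s) ∈ Ioo a b := by
  obtain ⟨N₀, hN₀⟩ : ∃ N₀ : ℕ, ∀ n ≥ N₀, Real.exp (-(n : ℝ) * s) < b - a :=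
    eventually_atTop.1 ((tendsto_exp_neg_natCast_mul_atTop hs).eventually_lt_const (sub_pos.2 hab))
  have hPN : ENNReal.ofReal a < Ppre T s (max N N₀) ε Z := hP.trans_le (iInf_le _ _)
  obtain ⟨F, x, n, hF, hsum⟩ := exists_finset_isBowenPacking_lt_sum_of_lt_Ppre ha hPN
  have hsmall : ∀ i ∈ F, Real.exp (-(n i : ℝ) * s) + a < b := fun i hi =>
    lt_sub_iff_add_lt.1 (hN₀ (n i) ((le_max_right N N₀).trans (hF.le_order i hi)))
  obtain ⟨I, hIF, hI⟩ := exists_subset_sum_mem_Ioo ha hsmall hsum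
  exact ⟨I, x, n, hF.mono (Finset.coe_subset.2 hIF) (le_max_left N N₀), hI⟩

end BowenPacking

/-- **Feng–Huang, Lemma 4.1**: let `Z ⊆ X` and `s, ε > 0` with `P^s_ε(Z) = ∞`.  Then for
every interval `(a,b) ⊆ ℝ` with `0 ≤ a < b` and every `N ∈ ℕ` there exists a finite
pairwise disjoint collection `{B̄_{n_i}(x_i, ε)}` of closed Bowen balls with `x_i ∈ Z`,
`n_i ≥ N` and `Σ_i e^{-n_i s} ∈ (a,b)`. -/
theorem exists_finite_disjoint_packing_sum_mem_Ioo
    {X : Type*} [MetricSpace X] [CompactSpace X]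
    (T : X → X) (hT : Continuous T) (Z : Set X)
    (s ε : ℝ) (hs : 0 < s) (hε : 0 < ε) (hP : PpreEps T s ε Z = ∞)
    (a b : ℝ) (ha : 0 ≤ a) (hab : a < b) (N : ℕ) :
    ∃ (I : Finset ℕ) (x : ℕ → X) (n : ℕ → ℕ),
      (∀ i ∈ I, x i ∈ Z ∧ N ≤ n i) ∧
      (∀ i ∈ I, ∀ j ∈ I, i ≠ j →
        Disjoint (bowenClosedBall T (x i) (n i) ε) (bowenClosedBall T (x j) (n j) ε)) ∧
      (∑ i ∈ I, Real.exp (-(n i : ℝ) * s)) ∈ Set.Ioo a b := by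
  obtain ⟨I, x, n, h, hsum⟩ := exists_finite_disjoint_packing_sum_mem_Ioo_general hs ha hab
    (hP ▸ ENNReal.ofReal_lt_top) N
  exact ⟨I, x, n, fun i hi => ⟨h.center_mem i hi, h.le_order i hi⟩,
    fun i hi j hj => h.pairwiseDisjoint hi hj, hsum⟩
end

section
/- Let (X,T) be a topological dynamical system, let Z ⊆ X be a Borel set, and let μ be a Borel probability measure on X with μ(Z) = 1. Then the packing topological entropy of Z is at least the measure-theoretical upper entropy of μ: h^P_top(T,Z) ≥ h̄_μ(T). -/
/-!
Fix a scale `ε` and exponents `s < t` above the packing entropy at scale `ε`. Then `Z` is covered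
by countably many sets `E` with `P^s_{N,ε}(E) < ∞` for some `N`. For `n ≥ N` and `2ε < δ`, let
`E_n` be the set of `x ∈ E` with `μ (B_n(x, δ)) ≤ exp (-t n)`. Take a maximal disjoint family of
closed Bowen balls of radius `ε` and order `n` centred in `E_n`: it is countable, and the
concentric open Bowen balls of radius `δ` cover `E_n`, so
`μ E_n ≤ ∑ exp (-t n) ≤ exp (-(t - s) n) * P^s_{N,ε}(E)`. These bounds are summable, hence by
Borel–Cantelli almost every point of `E` lies in only finitely many `E_n`, which bounds the upper
local entropy at scale `δ` by `t`. Letting `t` decrease and then `δ` tend to `0` along sequences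
bounds the upper local entropy almost everywhere on `Z`, and it remains to integrate.
-/

open Filter Set MeasureTheory Topology
open scoped ENNReal NNReal

lemma negLog_le_ofReal {m : ℝ≥0∞} {c : ℝ} (h : ENNReal.ofReal (Real.exp (-c)) ≤ m) :
    negLog m ≤ ENNReal.ofReal c := by
  have hm0 : m ≠ 0 := ((ENNReal.ofReal_pos.2 (Real.exp_pos _)).trans_le h).ne'
  rw [negLog, if_neg hm0]
  rcases eq_or_ne m ∞ with rfl | hm
  · simp
  have hexp : Real.exp (-c) ≤ m.toReal := (ENNReal.ofReal_le_iff_le_toReal hm).1 h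
  have hlog : -c ≤ Real.log m.toReal :=
    (Real.le_log_iff_exp_le (ENNReal.toReal_pos hm0 hm)).2 hexp
  exact ENNReal.ofReal_le_ofReal (neg_le.1 hlog)

lemma negLog_div_natCast_le_ofReal {m : ℝ≥0∞} {t : ℝ} {n : ℕ}
    (h : ENNReal.ofReal (Real.exp (-t * n)) ≤ m) : negLog m / n ≤ ENNReal.ofReal t := by
  refine ENNReal.div_le_of_le_mul ?_
  rw [← ENNReal.ofReal_natCast n, ← ENNReal.ofReal_mul' n.cast_nonneg]
  exact negLog_le_ofReal (by rwa [← neg_mul])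

lemma antitone_negLog : Antitone negLog := by
  intro a b hab
  rcases eq_or_ne a 0 with rfl | ha0
  · simp [negLog]
  rcases eq_or_ne a ∞ with rfl | ha
  · rw [top_le_iff.1 hab]
  rw [negLog.eq_def a, if_neg ha0]
  apply negLog_le_ofReal
  rwa [neg_neg, Real.exp_log (ENNReal.toReal_pos ha0 ha), ENNReal.ofReal_toReal ha]

section BowenBall

variable {X : Type*} [MetricSpace X] {T : X → X} {n : ℕ} {ε δ : ℝ} {x y : X}

/-- The orbit segment `(x, T x, …, T^{n-1} x)`. With the sup metric on `Fin n → X`, the distance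
between the orbit segments of `x` and `y` is the Bowen distance `d_n(x, y)`. -/
def orbitSegment (T : X → X) (n : ℕ) (x : X) : Fin n → X :=
  fun k => T^[k] x

lemma mem_bowenBall_iff_dist_orbitSegment_lt (hε : 0 < ε) :
    y ∈ bowenBall T x n ε ↔ dist (orbitSegment T n x) (orbitSegment T n y) < ε := by
  rw [dist_pi_lt_iff hε, Fin.forall_iff]
  rfl

lemma mem_bowenClosedBall_iff_dist_orbitSegment_le (hε : 0 ≤ ε) :
    y ∈ bowenClosedBall T x n ε ↔ dist (orbitSegment T n x) (orbitSegment T n y) ≤ ε := by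
  rw [dist_pi_le_iff hε, Fin.forall_iff]
  rfl

lemma mem_bowenClosedBall_self (hε : 0 ≤ ε) : x ∈ bowenClosedBall T x n ε :=
  (mem_bowenClosedBall_iff_dist_orbitSegment_le hε).2 (by rwa [dist_self])

lemma bowenBall_subset_bowenBall (h : ε ≤ δ) : bowenBall T x n ε ⊆ bowenBall T x n δ :=
  fun _ hy k hk => (hy k hk).trans_le h

lemma mem_bowenBall_of_not_disjoint_bowenClosedBall (hε : 0 < ε) (hδ : 2 * ε < δ)
    (h : ¬ Disjoint (bowenClosedBall T x n ε) (bowenClosedBall T y n ε)) :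
    y ∈ bowenBall T x n δ := by
  obtain ⟨z, hxz, hyz⟩ := not_disjoint_iff.1 h
  rw [mem_bowenClosedBall_iff_dist_orbitSegment_le hε.le] at hxz hyz
  rw [mem_bowenBall_iff_dist_orbitSegment_lt (by linarith)]
  linarith [dist_triangle_right (orbitSegment T n x) (orbitSegment T n y) (orbitSegment T n z)]

lemma countable_of_pairwiseDisjoint_bowenClosedBall [TopologicalSpace.SeparableSpace X]
    (hε : 0 < ε) {u : Set X} (hu : u.PairwiseDisjoint fun x => bowenClosedBall T x n ε) :
    u.Countable := by
  have hballs : u.PairwiseDisjoint fun x => Metric.ball (orbitSegment T n x) (ε / 2) := by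
    intro x hx y hy hxy
    have hy_notMem : y ∉ bowenClosedBall T x n ε := fun h =>
      disjoint_left.1 (hu hx hy hxy) h (mem_bowenClosedBall_self hε.le)
    rw [mem_bowenClosedBall_iff_dist_orbitSegment_le hε.le, not_le] at hy_notMem
    exact Metric.ball_disjoint_ball (by rw [add_halves]; exact hy_notMem.le)
  exact hballs.countable_of_isOpen (fun _ _ => Metric.isOpen_ball)
    fun _ _ => Metric.nonempty_ball.2 (half_pos hε)

lemma exists_pairwiseDisjoint_bowenClosedBall_covering (T : X → X) (n : ℕ) (hε : 0 < ε)
    (hδ : 2 * ε < δ) (F : Set X) :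
    ∃ u ⊆ F, (u.PairwiseDisjoint fun x => bowenClosedBall T x n ε) ∧
      F ⊆ ⋃ x ∈ u, bowenBall T x n δ := by
  -- With all weights equal, Vitali's selection produces a maximal disjoint subfamily.
  obtain ⟨u, huF, hdisj, hmeets⟩ := Vitali.exists_disjoint_subfamily_covering_enlargement
    (fun x => bowenClosedBall T x n ε) F (fun _ => 1) 2 one_lt_two
    (fun _ _ => zero_le_one) 1 (fun _ _ => le_rfl)
    (fun x _ => ⟨x, mem_bowenClosedBall_self hε.le⟩)
  refine ⟨u, huF, hdisj, fun y hy => ?_⟩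
  obtain ⟨x, hx, hyx, -⟩ := hmeets y hy
  refine mem_biUnion hx (mem_bowenBall_of_not_disjoint_bowenClosedBall hε hδ ?_)
  rwa [disjoint_comm, not_disjoint_iff_nonempty_inter]

end BowenBall

section Packing

variable {X : Type*} [MetricSpace X] {T : X → X} {s ε : ℝ} {Z : Set X}

lemma tsum_le_Ppre {ι : Type*} [Countable ι] {N : ℕ} {x : ι → X} {n : ι → ℕ}
    (hx : ∀ i, x i ∈ Z) (hn : ∀ i, N ≤ n i)
    (hdisj : Pairwise fun i j =>
      Disjoint (bowenClosedBall T (x i) (n i) ε) (bowenClosedBall T (x j) (n j) ε)) :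
    ∑' i, ENNReal.ofReal (Real.exp (-s * n i)) ≤ Ppre T s N ε Z := by
  rcases isEmpty_or_nonempty ι with _ | _
  · simp only [tsum_empty, zero_le]
  obtain ⟨f, hf⟩ := exists_injective_nat ι
  let g : ℕ → ι := Function.invFun f
  have hgf : ∀ i, g (f i) = i := Function.leftInverse_invFun hf
  have hcentres : ∀ k ∈ range f, x (g k) ∈ Z ∧ N ≤ n (g k) := fun k _ => ⟨hx _, hn _⟩
  have hdisj' : ∀ k ∈ range f, ∀ l ∈ range f, k ≠ l →
      Disjoint (bowenClosedBall T (x (g k)) (n (g k)) ε)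
        (bowenClosedBall T (x (g l)) (n (g l)) ε) := by
    rintro _ ⟨i, rfl⟩ _ ⟨j, rfl⟩ hij
    rw [hgf, hgf]
    exact hdisj fun h => hij (congrArg f h)
  calc ∑' i, ENNReal.ofReal (Real.exp (-s * n i))
      = ∑' k : range f, ENNReal.ofReal (Real.exp (-s * n (g k))) := by
        rw [tsum_range (fun k => ENNReal.ofReal (Real.exp (-s * n (g k)))) hf]
        simp only [hgf]
    _ ≤ Ppre T s N ε Z :=
        le_iSup_of_le (range f) <| le_iSup_of_le (x ∘ g) <| le_iSup_of_le (n ∘ g) <|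
          le_iSup₂_of_le hcentres hdisj' le_rfl

lemma Pouter_ne_top_of_packEntropyEps_lt (h : packEntropyEps T ε Z < ENNReal.ofReal s) :
    Pouter T s ε Z ≠ ∞ :=
  fun htop => h.not_ge (le_iSup₂_of_le s htop le_rfl)

lemma exists_cover_PpreEps_ne_top_of_Pouter_ne_top (h : Pouter T s ε Z ≠ ∞) :
    ∃ E : ℕ → Set X, Z ⊆ ⋃ i, E i ∧ ∀ i, PpreEps T s ε (E i) ≠ ∞ := by
  obtain ⟨E, hE⟩ := iInf_lt_iff.1 (lt_top_iff_ne_top.2 h)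
  obtain ⟨hcov, hsum⟩ := iInf_lt_iff.1 hE
  exact ⟨E, hcov, ENNReal.ne_top_of_tsum_ne_top hsum.ne⟩

end Packing

section LocalEntropy

variable {X : Type*} [MetricSpace X] [MeasurableSpace X]

/-- The upper local entropy at scale `ε`, `limsup_{n → ∞} -(1/n) log μ(B_n(x,ε))`, the counterpart
of `packEntropyEps`; the supremum over `ε > 0` is `upperLocalEntropy` by definition. -/
noncomputable def upperLocalEntropyEps (T : X → X) (μ : Measure X) (ε : ℝ) (x : X) : ℝ≥0∞ :=
  limsup (fun n : ℕ => negLog (μ (bowenBall T x n ε)) / n) atTop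

variable {T : X → X} {μ : Measure X} {ε δ s t : ℝ} {E Z : Set X} {x : X}

lemma upperLocalEntropyEps_anti (h : ε ≤ δ) :
    upperLocalEntropyEps T μ δ x ≤ upperLocalEntropyEps T μ ε x :=
  limsup_le_limsup (.of_forall fun _ =>
    ENNReal.div_le_div_right (antitone_negLog (measure_mono (bowenBall_subset_bowenBall h))) _)

lemma upperLocalEntropyEps_le_ofReal
    (h : ∀ᶠ n : ℕ in atTop, ENNReal.ofReal (Real.exp (-t * n)) ≤ μ (bowenBall T x n ε)) :
    upperLocalEntropyEps T μ ε x ≤ ENNReal.ofReal t :=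
  limsup_le_of_le (by isBoundedDefault) (h.mono fun _ => negLog_div_natCast_le_ofReal)

variable [TopologicalSpace.SeparableSpace X]

lemma measure_setOf_measure_bowenBall_le (hε : 0 < ε) (hδ : 2 * ε < δ) {N n : ℕ} (hn : N ≤ n)
    (c : ℝ≥0∞) :
    μ {x ∈ E | μ (bowenBall T x n δ) ≤ c} ≤
      c * ENNReal.ofReal (Real.exp (s * n)) * Ppre T s N ε E := by
  obtain ⟨u, hu, hdisj, hcov⟩ := exists_pairwiseDisjoint_bowenClosedBall_covering T n hε hδ
    {x ∈ E | μ (bowenBall T x n δ) ≤ c}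
  have hcount : u.Countable := countable_of_pairwiseDisjoint_bowenClosedBall hε hdisj
  have : Countable u := hcount.to_subtype
  have hexp : ENNReal.ofReal (Real.exp (s * n)) * ENNReal.ofReal (Real.exp (-s * n)) = 1 := by
    rw [← ENNReal.ofReal_mul (Real.exp_pos _).le, ← Real.exp_add, neg_mul, add_neg_cancel,
      Real.exp_zero, ENNReal.ofReal_one]
  calc μ {x ∈ E | μ (bowenBall T x n δ) ≤ c}
      ≤ μ (⋃ x ∈ u, bowenBall T x n δ) := measure_mono hcov
    _ ≤ ∑' x : u, μ (bowenBall T x n δ) := measure_biUnion_le μ hcount _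
    _ ≤ ∑' _ : u, c := ENNReal.tsum_le_tsum fun x => (hu x.2).2
    _ = c * ENNReal.ofReal (Real.exp (s * n)) * ∑' _ : u, ENNReal.ofReal (Real.exp (-s * n)) := by
        rw [← ENNReal.tsum_mul_left, mul_assoc, hexp, mul_one]
    _ ≤ c * ENNReal.ofReal (Real.exp (s * n)) * Ppre T s N ε E := by
        gcongr
        exact tsum_le_Ppre (fun x => (hu x.2).1) (fun _ => hn) (hdisj.subtype _ _)

lemma ae_eventually_lt_measure_bowenBall_of_PpreEps_ne_top (hε : 0 < ε) (hδ : 2 * ε < δ)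
    (hst : s < t) (hE : PpreEps T s ε E ≠ ∞) :
    ∀ᵐ x ∂μ, x ∈ E →
      ∀ᶠ n : ℕ in atTop, ENNReal.ofReal (Real.exp (-t * n)) < μ (bowenBall T x n δ) := by
  obtain ⟨N, hN⟩ : ∃ N, Ppre T s N ε E < ∞ := iInf_lt_iff.1 (lt_top_iff_ne_top.2 hE)
  let smallBallCentres (n : ℕ) : Set X :=
    {x ∈ E | μ (bowenBall T x n δ) ≤ ENNReal.ofReal (Real.exp (-t * n))}
  have hbound (k : ℕ) : μ (smallBallCentres (k + N)) ≤
      ENNReal.ofReal (Real.exp ((k + N : ℕ) * (s - t))) * Ppre T s N ε E := by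
    refine (measure_setOf_measure_bowenBall_le (s := s) hε hδ (Nat.le_add_left N k) _).trans_eq ?_
    rw [← ENNReal.ofReal_mul (Real.exp_pos _).le, ← Real.exp_add]
    ring_nf
  have hsummable : Summable fun k : ℕ => Real.exp ((k + N : ℕ) * (s - t)) :=
    (summable_nat_add_iff N).2 (Real.summable_exp_nat_mul_iff.2 (sub_neg.2 hst))
  have hfinite : ∑' k, μ (smallBallCentres (k + N)) ≠ ∞ := by
    refine ne_top_of_le_ne_top ?_ (ENNReal.tsum_le_tsum hbound)
    rw [ENNReal.tsum_mul_right]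
    exact ENNReal.mul_ne_top hsummable.tsum_ofReal_ne_top hN.ne
  filter_upwards [ae_eventually_notMem hfinite] with x hx hxE
  have hx' : ∀ᶠ n in atTop, x ∉ smallBallCentres n := by
    rwa [← map_add_atTop_eq_nat N, eventually_map]
  exact hx'.mono fun n hn => not_le.1 fun h => hn ⟨hxE, h⟩

lemma ae_upperLocalEntropyEps_le_ofReal (hε : 0 < ε) (hδ : 2 * ε < δ)
    (hst : s < t) (hZ : Pouter T s ε Z ≠ ∞) :
    ∀ᵐ x ∂μ, x ∈ Z → upperLocalEntropyEps T μ δ x ≤ ENNReal.ofReal t := by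
  obtain ⟨E, hcov, hE⟩ := exists_cover_PpreEps_ne_top_of_Pouter_ne_top hZ
  have hae := ae_all_iff.2 fun i =>
    ae_eventually_lt_measure_bowenBall_of_PpreEps_ne_top (μ := μ) hε hδ hst (hE i)
  filter_upwards [hae] with x hx hxZ
  obtain ⟨i, hi⟩ := mem_iUnion.1 (hcov hxZ)
  exact upperLocalEntropyEps_le_ofReal ((hx i hi).mono fun _ => le_of_lt)

lemma ae_upperLocalEntropyEps_le_packEntropyEps (hε : 0 < ε) (hδ : 2 * ε < δ) :
    ∀ᵐ x ∂μ, x ∈ Z → upperLocalEntropyEps T μ δ x ≤ packEntropyEps T ε Z := by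
  rcases eq_or_ne (packEntropyEps T ε Z) ∞ with htop | hfin
  · simp only [htop, le_top, implies_true, Filter.eventually_true]
  have hae (b : ℝ≥0∞) (hb : packEntropyEps T ε Z < b) :
      ∀ᵐ x ∂μ, x ∈ Z → upperLocalEntropyEps T μ δ x ≤ b := by
    obtain ⟨s, hs, hsb⟩ := ENNReal.lt_iff_exists_nnreal_btwn.1 hb
    obtain ⟨t, hst, htb⟩ := ENNReal.lt_iff_exists_nnreal_btwn.1 hsb
    rw [← ENNReal.ofReal_coe_nnreal] at hs htb
    have hst' : (s : ℝ) < t := by exact_mod_cast hst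
    filter_upwards [ae_upperLocalEntropyEps_le_ofReal (μ := μ) hε hδ hst'
      (Pouter_ne_top_of_packEntropyEps_lt hs)] with x hx hxZ
    exact (hx hxZ).trans htb.le
  obtain ⟨b, -, hb, hlim⟩ := exists_seq_strictAnti_tendsto' (lt_top_iff_ne_top.2 hfin)
  filter_upwards [ae_all_iff.2 fun k => hae (b k) (hb k).1] with x hx hxZ
  exact ge_of_tendsto' hlim fun k => hx k hxZ

theorem ae_upperLocalEntropy_le_packEntropy (T : X → X) (Z : Set X) (μ : Measure X) :
    ∀ᵐ x ∂μ, x ∈ Z → upperLocalEntropy T μ x ≤ packEntropy T Z := by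
  have hscale (δ : ℝ) (hδ : 0 < δ) :
      ∀ᵐ x ∂μ, x ∈ Z → upperLocalEntropyEps T μ δ x ≤ packEntropy T Z := by
    have hε : 0 < δ / 3 := by positivity
    have hεδ : 2 * (δ / 3) < δ := by linarith
    filter_upwards [ae_upperLocalEntropyEps_le_packEntropyEps (μ := μ) hε hεδ] with x hx hxZ
    exact le_iSup₂_of_le (δ / 3) hε (hx hxZ)
  have hscales := ae_all_iff.2 fun k : ℕ => hscale (1 / ((k : ℝ) + 1)) Nat.one_div_pos_of_nat
  filter_upwards [hscales] with x hx hxZ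
  refine iSup₂_le fun ε hε => ?_
  obtain ⟨k, hk⟩ := exists_nat_one_div_lt hε
  exact (upperLocalEntropyEps_anti hk.le).trans (hx k hxZ)

theorem upperEntropy_le_packEntropy_general (T : X → X) (Z : Set X) (μ : Measure X)
    (hμZ : ∀ᵐ x ∂μ, x ∈ Z) : upperEntropy T μ ≤ packEntropy T Z * μ univ :=
  calc ∫⁻ x, upperLocalEntropy T μ x ∂μ
      ≤ ∫⁻ _, packEntropy T Z ∂μ :=
        lintegral_mono_ae ((ae_upperLocalEntropy_le_packEntropy T Z μ).mp
          (hμZ.mono fun _ hxZ h => h hxZ))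
    _ = packEntropy T Z * μ univ := lintegral_const _

end LocalEntropy

/-- **Feng–Huang, proof of Theorem 1.3, Part 1**: if `Z ⊆ X` is a Borel set and `μ` is a
Borel probability measure on `X` with `μ(Z) = 1`, then `h^P_top(T,Z) ≥ h̄_μ(T)`. -/
theorem upperEntropy_le_packEntropy
    {X : Type*} [MetricSpace X] [CompactSpace X] [MeasurableSpace X] [BorelSpace X]
    (T : X → X) (hT : Continuous T) (Z : Set X) (hZ : MeasurableSet Z)
    (μ : Measure X) (hμ : IsProbabilityMeasure μ) (hμZ : μ Z = 1) :
    upperEntropy T μ ≤ packEntropy T Z := by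
  have hae : ∀ᵐ x ∂μ, x ∈ Z := (mem_ae_iff_prob_eq_one hZ).2 hμZ
  simpa only [measure_univ, mul_one] using upperEntropy_le_packEntropy_general T Z μ hae
end
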